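/- arXiv:2512.00197 — 15 statements merged into one kernel-verified Lean document; each statement's English description precedes it below -/
import Mathlib

section
/- Let n ≥ 1, let C ⊆ ℝ^n be a sharp open convex cone, and let Γ be a subgroup of GL(n,ℝ) such that every γ ∈ Γ satisfies |det γ| = 1 and γ · C = C. Then for every x ∈ C and every linear functional α ∈ (ℝ^n)* with α(y) < 0 for all y ∈ closure(C) \ {0}, the function γ ↦ α(γ · x) on Γ tends to −∞ as ‖γ‖ → ∞ within Γ; formally, it tends to −∞ along the pullback (comap) under γ ↦ ‖γ‖ of the atTop filter, where ‖·‖ is a norm on the n×n real matrices. -/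
attribute [local instance] Matrix.normedAddCommGroup

/-- for a sharp open convex cone `C` preserved by a subgroup `Γ` of
`GL(n,ℝ)` consisting of matrices with `|det| = 1`, for any `x ∈ C` and any linear
functional `α` negative on `closure C \ {0}`, the matrix coefficient
`γ ↦ α (γ · x)` tends to `-∞` as `‖γ‖ → ∞` within `Γ`. -/
theorem stmt_0 (n : ℕ) (hn : 1 ≤ n) (C : Set (Fin n → ℝ))
    (hCne : C.Nonempty) (hCopen : IsOpen C) (hCconv : Convex ℝ C)
    (hCcone : ∀ t : ℝ, 0 < t → ∀ x ∈ C, t • x ∈ C)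
    (hCsharp : ¬ ∃ x v : Fin n → ℝ, v ≠ 0 ∧ ∀ t : ℝ, x + t • v ∈ closure C)
    (Γ : Subgroup (Matrix.GeneralLinearGroup (Fin n) ℝ))
    (hdet : ∀ γ ∈ Γ, |Matrix.det ((γ : Matrix.GeneralLinearGroup (Fin n) ℝ) :
      Matrix (Fin n) (Fin n) ℝ)| = 1)
    (hinv : ∀ γ ∈ Γ, (fun v => Matrix.mulVec ((γ : Matrix.GeneralLinearGroup (Fin n) ℝ) :
      Matrix (Fin n) (Fin n) ℝ) v) '' C = C)
    (x : Fin n → ℝ) (hx : x ∈ C)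
    (α : (Fin n → ℝ) →ₗ[ℝ] ℝ) (hα : ∀ y ∈ closure C \ {0}, α y < 0) :
    Filter.Tendsto
      (fun γ : Γ => α (Matrix.mulVec (((γ : Matrix.GeneralLinearGroup (Fin n) ℝ)) :
        Matrix (Fin n) (Fin n) ℝ) x))
      (Filter.comap
        (fun γ : Γ => ‖(((γ : Matrix.GeneralLinearGroup (Fin n) ℝ)) :
          Matrix (Fin n) (Fin n) ℝ)‖) Filter.atTop)
      Filter.atBot := by
  have hsm : ∀ t : ℝ, 0 < t → ∀ y ∈ closure C, t • y ∈ closure C := by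
    intro t ht y hy
    have hm : Set.MapsTo (fun y : Fin n → ℝ => t • y) C C := fun y hy => hCcone t ht y hy
    exact hm.closure (continuous_const_smul t) hy
  have hαc : Continuous α := α.continuous_of_finiteDimensional
  have hc : ∃ c : ℝ, 0 < c ∧ ∀ y ∈ closure C, c * ‖y‖ ≤ - α y := by
    have hK : IsCompact (closure C ∩ Metric.sphere (0 : Fin n → ℝ) 1) :=
      (isCompact_sphere 0 1).inter_left isClosed_closure
    have hunit : ∃ c : ℝ, 0 < c ∧
        ∀ y ∈ closure C ∩ Metric.sphere (0 : Fin n → ℝ) 1, c ≤ - α y := by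
      rcases (closure C ∩ Metric.sphere (0 : Fin n → ℝ) 1).eq_empty_or_nonempty with h | h
      · exact ⟨1, one_pos, by simp [h]⟩
      · obtain ⟨z, hz, hmin⟩ := hK.exists_isMinOn h (f := fun y => - α y) hαc.neg.continuousOn
        refine ⟨- α z, ?_, fun y hy => hmin hy⟩
        have hz0 : z ≠ 0 := by
          rintro rfl
          simp at hz
        have := hα z ⟨hz.1, hz0⟩
        linarith
    obtain ⟨c, hc0, hc⟩ := hunit
    refine ⟨c, hc0, fun y hy => ?_⟩
    by_cases hy0 : y = 0
    · simp [hy0]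
    have hp : 0 < ‖y‖ := norm_pos_iff.mpr hy0
    have h1 := hc (‖y‖⁻¹ • y) ⟨hsm _ (inv_pos.mpr hp) y hy, by
      simp [norm_smul, hp.ne']⟩
    rw [map_smul, smul_eq_mul] at h1
    calc c * ‖y‖ ≤ -(‖y‖⁻¹ * α y) * ‖y‖ := by gcongr
      _ = - α y := by field_simp
  obtain ⟨c, hc0, hc⟩ := hc
  obtain ⟨ε, hε, hball⟩ := Metric.isOpen_iff.mp hCopen x hx
  rw [Filter.tendsto_atBot]
  intro b
  refine ((Filter.eventually_gt_atTop (3 * |b| / c / (ε / 2))).comap _).mono ?_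
  intro γ hγ
  by_contra hb
  push Not at hb
  refine absurd hγ (not_lt.mpr ?_)
  have hmap : ∀ y ∈ C, Matrix.mulVec ((γ : Matrix.GeneralLinearGroup (Fin n) ℝ) :
      Matrix (Fin n) (Fin n) ℝ) y ∈ closure C := by
    intro y hy
    apply subset_closure
    rw [← hinv γ γ.2]
    exact ⟨y, hy, rfl⟩
  generalize (((γ : Matrix.GeneralLinearGroup (Fin n) ℝ)) : Matrix (Fin n) (Fin n) ℝ) = A at *
  have habs : -b ≤ |b| := neg_le_abs b
  rw [Matrix.norm_le_iff (by positivity)]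
  intro i j
  have hmem : ∀ s : ℝ, |s| = ε / 2 → x + s • Pi.single j (1 : ℝ) ∈ C := by
    intro s hs
    apply hball
    have h1 : ‖(Pi.single j (1 : ℝ) : Fin n → ℝ)‖ ≤ 1 := by
      rw [pi_norm_le_iff_of_nonneg zero_le_one]
      intro k
      by_cases hk : k = j
      · subst hk
        simp
      · simp [hk]
    rw [mem_ball_iff_norm, add_sub_cancel_left, norm_smul, Real.norm_eq_abs, hs]
    nlinarith
  have hp := hc _ (hmap _ (hmem (ε / 2) (abs_of_pos (by linarith))))
  have hm := hc _ (hmap _ (hmem (-(ε / 2)) (by rw [abs_neg, abs_of_pos (by linarith)])))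
  have h0 := hc _ (hmap _ hx)
  rw [Matrix.mulVec_add, Matrix.mulVec_smul] at hp hm
  rw [map_add, map_smul, smul_eq_mul] at hp hm
  set w := A.mulVec (Pi.single j (1 : ℝ)) with hw
  set u := A.mulVec x with hu
  have hm0 := mul_nonneg hc0.le (norm_nonneg (u + (-(ε / 2)) • w))
  have hp' : c * ‖u + (ε / 2) • w‖ ≤ 2 * |b| := by linarith
  have h0' : c * ‖u‖ ≤ |b| := by linarith
  have htri : ‖(ε / 2) • w‖ ≤ ‖u + (ε / 2) • w‖ + ‖u‖ := by
    have := norm_sub_le (u + (ε / 2) • w) u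
    rwa [add_sub_cancel_left] at this
  rw [norm_smul, Real.norm_of_nonneg (by linarith : 0 ≤ ε / 2)] at htri
  have hwi : ‖A i j‖ ≤ ‖w‖ := by
    have := norm_le_pi_norm w i
    simpa [hw] using this
  refine hwi.trans ?_
  rw [le_div_iff₀ (by linarith), le_div_iff₀ hc0]
  have := mul_le_mul_of_nonneg_left htri hc0.le
  linarith
end

section
/- Let n ≥ 1 and let Γ be a subgroup of GL(n,ℝ). Suppose there exist a nonempty open set U ⊆ ℝ^n and a nonempty open set V ⊆ (ℝ^n)* such that for every x ∈ U and α ∈ V one has α(γ · x) > 0 for all γ ∈ Γ, and the function γ ↦ α(γ · x) tends to +∞ along the cocompact filter of Γ (Γ carrying the subspace topology from the n×n real matrices). Then there exists a sharp open convex cone C ⊆ ℝ^n with γ · C = C for every γ ∈ Γ. -/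
/-- if a subgroup `Γ` of `GL(n,ℝ)` admits nonempty open sets
`U ⊆ ℝⁿ`, `V ⊆ (ℝⁿ)*` such that every matrix coefficient `γ ↦ α (γ · x)` with
`(x, α) ∈ U × V` is positive and tends to `+∞` along the cocompact filter of `Γ`
(with the subspace topology induced from the `n×n` matrices), then `Γ` preserves
a sharp open convex cone. -/
theorem stmt_1 (n : ℕ) (hn : 1 ≤ n)
    (Γ : Subgroup (Matrix.GeneralLinearGroup (Fin n) ℝ))
    (U : Set (Fin n → ℝ)) (hUne : U.Nonempty) (hUo : IsOpen U)
    (V : Set ((Fin n → ℝ) →L[ℝ] ℝ)) (hVne : V.Nonempty) (hVo : IsOpen V)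
    (h : ∀ x ∈ U, ∀ α ∈ V,
      (∀ γ : Γ, 0 < α (Matrix.mulVec ((γ : Matrix.GeneralLinearGroup (Fin n) ℝ) :
        Matrix (Fin n) (Fin n) ℝ) x)) ∧
      Filter.Tendsto
        (fun γ : Γ => α (Matrix.mulVec ((γ : Matrix.GeneralLinearGroup (Fin n) ℝ) :
          Matrix (Fin n) (Fin n) ℝ) x))
        (@Filter.cocompact Γ
          (TopologicalSpace.induced
            (fun γ : Γ => ((γ : Matrix.GeneralLinearGroup (Fin n) ℝ) :
              Matrix (Fin n) (Fin n) ℝ)) inferInstance))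
        Filter.atTop) :
    ∃ C : Set (Fin n → ℝ), C.Nonempty ∧ IsOpen C ∧ Convex ℝ C ∧
      (∀ t : ℝ, 0 < t → ∀ x ∈ C, t • x ∈ C) ∧
      (¬ ∃ x v : Fin n → ℝ, v ≠ 0 ∧ ∀ t : ℝ, x + t • v ∈ closure C) ∧
      (∀ γ ∈ Γ, (fun v => Matrix.mulVec ((γ : Matrix.GeneralLinearGroup (Fin n) ℝ) :
        Matrix (Fin n) (Fin n) ℝ) v) '' C = C) := by
  classical
  set D : Set (Fin n → ℝ) := {x | ∀ γ ∈ Γ, ∀ α ∈ V,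
    0 ≤ α (Matrix.mulVec (γ : Matrix (Fin n) (Fin n) ℝ) x)} with hD
  have hcont : ∀ γ : Matrix.GeneralLinearGroup (Fin n) ℝ,
      Continuous (fun x : Fin n → ℝ => Matrix.mulVec (γ : Matrix (Fin n) (Fin n) ℝ) x) :=
    fun γ => Continuous.matrix_mulVec continuous_const continuous_id
  have hDclosed : IsClosed D := by
    have : D = ⋂ γ ∈ Γ, ⋂ α ∈ V,
        {x | 0 ≤ α (Matrix.mulVec (γ : Matrix (Fin n) (Fin n) ℝ) x)} := by
      ext x; simp [hD]
    rw [this]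
    refine isClosed_biInter fun γ _ => isClosed_biInter fun α _ => ?_
    exact isClosed_le continuous_const (α.continuous.comp (hcont γ))
  have hDconv : Convex ℝ D := by
    intro x hx y hy a b ha hb _ γ hγ α hα
    rw [Matrix.mulVec_add, Matrix.mulVec_smul, Matrix.mulVec_smul, map_add, map_smul, map_smul]
    exact add_nonneg (mul_nonneg ha (hx γ hγ α hα)) (mul_nonneg hb (hy γ hγ α hα))
  have hUD : U ⊆ D := fun x hx γ hγ α hα => ((h x hx α hα).1 ⟨γ, hγ⟩).le
  have hDinv : ∀ γ ∈ Γ, ∀ x ∈ D, Matrix.mulVec (γ : Matrix (Fin n) (Fin n) ℝ) x ∈ D := by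
    intro γ hγ x hx δ hδ α hα
    have := hx (δ * γ) (Γ.mul_mem hδ hγ) α hα
    rwa [Matrix.GeneralLinearGroup.coe_mul, ← Matrix.mulVec_mulVec] at this
  have hinv1 : ∀ (γ : Matrix.GeneralLinearGroup (Fin n) ℝ) (x : Fin n → ℝ),
      Matrix.mulVec (γ : Matrix (Fin n) (Fin n) ℝ)
        (Matrix.mulVec ((γ⁻¹ : Matrix.GeneralLinearGroup (Fin n) ℝ) :
          Matrix (Fin n) (Fin n) ℝ) x) = x := by
    intro γ x
    rw [Matrix.mulVec_mulVec, ← Matrix.GeneralLinearGroup.coe_mul, mul_inv_cancel]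
    simp
  have hCinv : ∀ γ ∈ Γ, ∀ x ∈ interior D,
      Matrix.mulVec (γ : Matrix (Fin n) (Fin n) ℝ) x ∈ interior D := by
    intro γ hγ x hx
    refine mem_interior.2 ⟨(fun y => Matrix.mulVec
      ((γ⁻¹ : Matrix.GeneralLinearGroup (Fin n) ℝ) : Matrix (Fin n) (Fin n) ℝ) y) ⁻¹' interior D,
      ?_, isOpen_interior.preimage (hcont γ⁻¹), ?_⟩
    · intro y hy
      have := hDinv γ hγ _ (interior_subset hy)
      rwa [hinv1] at this
    · have := hinv1 γ⁻¹ x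
      rw [inv_inv] at this
      rw [Set.mem_preimage, this]
      exact hx
  refine ⟨interior D, ?_, isOpen_interior, hDconv.interior, ?_, ?_, ?_⟩
  · exact hUne.mono (interior_maximal hUD hUo)
  · intro t ht x hx
    refine mem_interior.2 ⟨(fun y => t⁻¹ • y) ⁻¹' interior D, ?_,
      isOpen_interior.preimage (continuous_const_smul t⁻¹), ?_⟩
    · intro y hy γ hγ α hα
      have := interior_subset hy γ hγ α hα
      rw [Matrix.mulVec_smul, map_smul, smul_eq_mul] at this
      exact nonneg_of_mul_nonneg_right this (inv_pos.2 ht)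
    · rw [Set.mem_preimage, smul_smul, inv_mul_cancel₀ ht.ne', one_smul]
      exact hx
  · rintro ⟨x, v, hv, hline⟩
    have hmem : ∀ t : ℝ, x + t • v ∈ D :=
      fun t => closure_minimal interior_subset hDclosed (hline t)
    have hzero : ∀ α ∈ V, α v = 0 := by
      intro α hα
      by_contra hne
      have := hmem (-(α x + 1) / α v) 1 Γ.one_mem α hα
      rw [Units.val_one, Matrix.one_mulVec, map_add, map_smul, smul_eq_mul,
        div_mul_cancel₀ _ hne] at this
      linarith
    obtain ⟨α, hα⟩ := hVne
    apply hv
    have hall : ∀ β : (Fin n → ℝ) →L[ℝ] ℝ, β v = 0 := by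
      intro β
      have hc : Continuous (fun s : ℝ => α + s • β) := by fun_prop
      have hev : ∀ᶠ s in nhds (0 : ℝ), α + s • β ∈ V :=
        hc.continuousAt.eventually (hVo.mem_nhds (by simpa using hα))
      obtain ⟨ε, hε, hball⟩ := Metric.eventually_nhds_iff.1 hev
      have h1 := hzero _ (hball (y := ε / 2) (by
        rw [Real.dist_eq, sub_zero, abs_of_pos (half_pos hε)]; exact half_lt_self hε))
      simp [hzero α hα] at h1
      exact h1.resolve_left hε.ne'
    ext i
    exact hall (ContinuousLinearMap.proj i)
  · intro γ hγ
    apply Set.Subset.antisymm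
    · rintro _ ⟨x, hx, rfl⟩
      exact hCinv γ hγ x hx
    · intro x hx
      exact ⟨_, hCinv γ⁻¹ (Γ.inv_mem hγ) x hx, hinv1 γ x⟩
end

section
/- Let X be a topological space, f_1, …, f_s : X → ℝ, and λ ∈ ℝ^s. Suppose there exists ε > 0 such that every μ ∈ ℝ^s with |μ_i − λ_i| ≤ ε for all i belongs to Λ. Then F_λ and the function x ↦ ∑_i |f_i(x)| have the same order along the cocompact filter of X: each is big-O of the other along the cocompact filter of X. -/
open Filter Asymptotics

/-- if `λ` has an `ε`-cube neighbourhood contained in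
`Λ = {μ | F_μ := ∑ i, μ i * f i is bounded below and tends to +∞ along the
cocompact filter}`, then `F_λ` and `x ↦ ∑ i |f i x|` have the same order along
the cocompact filter of `X`. -/
theorem stmt_2 (X : Type*) [TopologicalSpace X] (s : ℕ) (f : Fin s → X → ℝ)
    (lam : Fin s → ℝ)
    (hcube : ∃ ε > (0 : ℝ), ∀ μ : Fin s → ℝ, (∀ i, |μ i - lam i| ≤ ε) →
      (∃ c : ℝ, ∀ x : X, c ≤ ∑ i, μ i * f i x) ∧
      Tendsto (fun x : X => ∑ i, μ i * f i x) (cocompact X) atTop) :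
    ((fun x : X => ∑ i, lam i * f i x) =O[cocompact X] fun x : X => ∑ i, |f i x|) ∧
    ((fun x : X => ∑ i, |f i x|) =O[cocompact X] fun x : X => ∑ i, lam i * f i x) := by
  obtain ⟨ε, hε, h⟩ := hcube
  constructor
  · refine IsBigO.of_bound (∑ i, |lam i|) (Eventually.of_forall fun x => ?_)
    have h0 : (0 : ℝ) ≤ ∑ i, |f i x| := Finset.sum_nonneg fun i _ => abs_nonneg _
    rw [Real.norm_eq_abs, Real.norm_eq_abs, abs_of_nonneg h0, Finset.sum_mul]
    refine (Finset.abs_sum_le_sum_abs _ _).trans (Finset.sum_le_sum fun i _ => ?_)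
    rw [abs_mul]
    exact mul_le_mul_of_nonneg_left
      (Finset.single_le_sum (f := fun j => |f j x|) (fun j _ => abs_nonneg _) (Finset.mem_univ i))
      (abs_nonneg _)
  · have key : ∀ᶠ x in cocompact X, ∀ σ : Fin s → Bool,
        0 ≤ ∑ i, (lam i - ε * (if σ i then 1 else -1)) * f i x := by
      rw [eventually_all]
      intro σ
      refine (h (fun i => lam i - ε * (if σ i then 1 else -1)) ?_).2.eventually_ge_atTop 0
      intro i
      cases σ i <;> simp [abs_of_pos hε]
    refine IsBigO.of_bound ε⁻¹ (key.mono fun x hx => ?_)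
    have h1 := hx (fun i => decide (0 ≤ f i x))
    have h2 : ∑ i, (lam i - ε * (if decide (0 ≤ f i x) then 1 else -1)) * f i x
        = ∑ i, lam i * f i x - ε * ∑ i, |f i x| := by
      rw [Finset.mul_sum, ← Finset.sum_sub_distrib]
      refine Finset.sum_congr rfl fun i _ => ?_
      by_cases hi : 0 ≤ f i x
      · simp only [hi, decide_true, if_true, abs_of_nonneg hi]
        ring
      · simp only [hi, decide_false, abs_of_neg (not_le.mp hi)]
        simp
        ring
    rw [h2] at h1
    have h0 : (0 : ℝ) ≤ ∑ i, |f i x| := Finset.sum_nonneg fun i _ => abs_nonneg _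
    rw [Real.norm_eq_abs, Real.norm_eq_abs, abs_of_nonneg h0, ← div_eq_inv_mul, le_div_iff₀ hε]
    have := le_abs_self (∑ i, lam i * f i x)
    linarith
end

section
/- Let n ≥ 1, let Γ be a set of n×n real matrices with the subspace topology, and let U ⊆ ℝ^n and V ⊆ (ℝ^n)* be nonempty open sets such that for every (x, α) ∈ U × V the function γ ↦ α(γ · x) tends to +∞ along the cocompact filter of Γ. Then for every (x, α) ∈ U × V, the functions γ ↦ α(γ · x) and γ ↦ ‖γ‖ have the same order along the cocompact filter of Γ: each is big-O of the other (here ‖·‖ is a norm on the n×n real matrices). -/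
open Filter Asymptotics

attribute [local instance] Matrix.normedAddCommGroup

theorem exists_step_aux {E : Type*} [NormedAddCommGroup E] [NormedSpace ℝ E] {U : Set E}
    (hU : IsOpen U) {x : E} (hx : x ∈ U) (e : E) :
    ∃ r : ℝ, 0 < r ∧ x + r • e ∈ U ∧ x - r • e ∈ U := by
  have h1 : ∀ᶠ r : ℝ in nhds 0, x + r • e ∈ U := by
    have : ContinuousAt (fun r : ℝ => x + r • e) 0 := by fun_prop
    exact this.eventually (hU.mem_nhds (by simpa using hx))
  have h2 : ∀ᶠ r : ℝ in nhds 0, x - r • e ∈ U := by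
    have : ContinuousAt (fun r : ℝ => x - r • e) 0 := by fun_prop
    exact this.eventually (hU.mem_nhds (by simpa using hx))
  obtain ⟨ε, hε, hb⟩ := Metric.eventually_nhds_iff.1 (h1.and h2)
  have := hb (y := ε / 2) (by rw [Real.dist_eq, sub_zero, abs_of_pos (by positivity)]; linarith)
  exact ⟨ε / 2, by positivity, this.1, this.2⟩

/-- if `Γ` is a set of `n×n` real matrices (with the subspace
topology) and `U`, `V` are nonempty open sets such that every matrix coefficient
`γ ↦ α (γ · x)`, `(x, α) ∈ U × V`, tends to `+∞` along the cocompact filter of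
`Γ`, then each such matrix coefficient has the same order as `γ ↦ ‖γ‖` along the
cocompact filter of `Γ`. -/
theorem stmt_3 (n : ℕ) (hn : 1 ≤ n) (Γ : Set (Matrix (Fin n) (Fin n) ℝ))
    (U : Set (Fin n → ℝ)) (hUne : U.Nonempty) (hUo : IsOpen U)
    (V : Set ((Fin n → ℝ) →L[ℝ] ℝ)) (hVne : V.Nonempty) (hVo : IsOpen V)
    (h : ∀ x ∈ U, ∀ α ∈ V,
      Tendsto (fun γ : Γ => α (Matrix.mulVec (γ : Matrix (Fin n) (Fin n) ℝ) x))
        (cocompact Γ) atTop) :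
    ∀ x ∈ U, ∀ α ∈ V,
      ((fun γ : Γ => α (Matrix.mulVec (γ : Matrix (Fin n) (Fin n) ℝ) x)) =O[cocompact Γ]
        fun γ : Γ => ‖(γ : Matrix (Fin n) (Fin n) ℝ)‖) ∧
      ((fun γ : Γ => ‖(γ : Matrix (Fin n) (Fin n) ℝ)‖) =O[cocompact Γ]
        fun γ : Γ => α (Matrix.mulVec (γ : Matrix (Fin n) (Fin n) ℝ) x)) := by
  intro x hx α hα
  constructor
  · refine IsBigO.of_bound (‖α‖ * ∑ j, |x j|) (Eventually.of_forall fun γ => ?_)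
    have hm : ‖Matrix.mulVec (γ : Matrix (Fin n) (Fin n) ℝ) x‖
        ≤ ‖(γ : Matrix (Fin n) (Fin n) ℝ)‖ * ∑ j, |x j| := by
      refine (pi_norm_le_iff_of_nonneg (by positivity)).2 fun i => ?_
      rw [Matrix.mulVec, dotProduct, Finset.mul_sum]
      refine (norm_sum_le _ _).trans (Finset.sum_le_sum fun j _ => ?_)
      rw [norm_mul, Real.norm_eq_abs (x j)]
      exact mul_le_mul_of_nonneg_right (Matrix.norm_entry_le_entrywise_sup_norm _) (abs_nonneg _)
    rw [norm_norm]
    calc _ ≤ ‖α‖ * ‖Matrix.mulVec (γ : Matrix (Fin n) (Fin n) ℝ) x‖ := α.le_opNorm _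
      _ ≤ ‖α‖ * (‖(γ : Matrix (Fin n) (Fin n) ℝ)‖ * ∑ j, |x j|) := by gcongr
      _ = _ := by ring
  · have key : ∀ i j : Fin n, ∃ C : ℝ, 0 < C ∧ ∀ᶠ γ : Γ in cocompact Γ,
        |(γ : Matrix (Fin n) (Fin n) ℝ) i j| ≤
          C * α (Matrix.mulVec (γ : Matrix (Fin n) (Fin n) ℝ) x) := by
      intro i j
      obtain ⟨r, hr, hr1, hr2⟩ := exists_step_aux hUo hx (Pi.single j (1 : ℝ))
      obtain ⟨s, hs, hs1, hs2⟩ := exists_step_aux hVo hα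
        (ContinuousLinearMap.proj (R := ℝ) (φ := fun _ : Fin n => ℝ) i)
      refine ⟨(r * s)⁻¹, by positivity, ?_⟩
      filter_upwards [(h _ hr1 _ hs1).eventually_gt_atTop 0, (h _ hr1 _ hs2).eventually_gt_atTop 0,
        (h _ hr2 _ hs1).eventually_gt_atTop 0, (h _ hr2 _ hs2).eventually_gt_atTop 0]
        with γ h1 h2 h3 h4
      rw [inv_mul_eq_div, le_div_iff₀ (by positivity)]
      simp only [Matrix.mulVec_add, Matrix.mulVec_sub, Matrix.mulVec_smul, map_add, map_sub,
        map_smul, add_apply, sub_apply, smul_apply, ContinuousLinearMap.add_apply,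
        ContinuousLinearMap.sub_apply, ContinuousLinearMap.smul_apply,
        ContinuousLinearMap.proj_apply, Matrix.mulVec_single_one, Matrix.col_apply,
        smul_eq_mul] at h1 h2 h3 h4
      rw [← abs_of_pos (mul_pos hr hs), ← abs_mul, abs_le]
      constructor <;> nlinarith
    choose C hC hK using key
    refine IsBigO.of_bound (∑ i, ∑ j, C i j) ?_
    filter_upwards [eventually_all.2 fun i => eventually_all.2 fun j => hK i j,
      (h x hx α hα).eventually_ge_atTop 0] with γ h1 h0
    have hCC : 0 ≤ ∑ i, ∑ j, C i j :=
      Finset.sum_nonneg fun i _ => Finset.sum_nonneg fun j _ => (hC i j).le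
    rw [norm_norm, Real.norm_of_nonneg h0, Matrix.norm_le_iff (mul_nonneg hCC h0)]
    intro i j
    refine (h1 i j).trans (mul_le_mul_of_nonneg_right ?_ h0)
    calc C i j ≤ ∑ j, C i j :=
          Finset.single_le_sum (f := fun j => C i j) (fun j _ => (hC i j).le) (Finset.mem_univ j)
      _ ≤ _ := Finset.single_le_sum (f := fun i => ∑ j, C i j)
          (fun i _ => Finset.sum_nonneg fun j _ => (hC i j).le) (Finset.mem_univ i)
end

section
/- Let X be a topological space, f_1, …, f_s : X → ℝ, let λ, μ ∈ Λ and t ∈ (0,1). Then F_{tλ+(1−t)μ} and F_λ + F_μ have the same order along the cocompact filter of X: each of the functions x ↦ F_{tλ+(1−t)μ}(x) and x ↦ F_λ(x) + F_μ(x) is big-O of the other along the cocompact filter of X. -/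
open Filter Asymptotics

/-- if `λ, μ ∈ Λ` (i.e. `F_λ` and `F_μ` are bounded below and tend
to `+∞` along the cocompact filter) and `t ∈ (0,1)`, then `F_{tλ+(1−t)μ}` and
`F_λ + F_μ` have the same order along the cocompact filter of `X`. -/
theorem stmt_6 (X : Type*) [TopologicalSpace X] (s : ℕ) (f : Fin s → X → ℝ)
    (lam mu : Fin s → ℝ)
    (hlam : (∃ c : ℝ, ∀ x : X, c ≤ ∑ i, lam i * f i x) ∧
      Tendsto (fun x : X => ∑ i, lam i * f i x) (cocompact X) atTop)
    (hmu : (∃ c : ℝ, ∀ x : X, c ≤ ∑ i, mu i * f i x) ∧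
      Tendsto (fun x : X => ∑ i, mu i * f i x) (cocompact X) atTop)
    (t : ℝ) (ht : t ∈ Set.Ioo (0 : ℝ) 1) :
    ((fun x : X => ∑ i, (t * lam i + (1 - t) * mu i) * f i x) =O[cocompact X]
      fun x : X => (∑ i, lam i * f i x) + ∑ i, mu i * f i x) ∧
    ((fun x : X => (∑ i, lam i * f i x) + ∑ i, mu i * f i x) =O[cocompact X]
      fun x : X => ∑ i, (t * lam i + (1 - t) * mu i) * f i x) := by
  obtain ⟨h0, h1⟩ := ht
  have h1' : 0 < 1 - t := by linarith
  have key : ∀ x : X, ∑ i, (t * lam i + (1 - t) * mu i) * f i x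
      = t * (∑ i, lam i * f i x) + (1 - t) * ∑ i, mu i * f i x := by
    intro x
    rw [Finset.mul_sum, Finset.mul_sum, ← Finset.sum_add_distrib]
    exact Finset.sum_congr rfl fun i _ => by ring
  simp only [key]
  have hA := hlam.2.eventually_ge_atTop 0
  have hB := hmu.2.eventually_ge_atTop 0
  constructor
  · refine IsBigO.of_bound 1 ?_
    filter_upwards [hA, hB] with x ha hb
    generalize (∑ i, lam i * f i x) = a at *
    generalize (∑ i, mu i * f i x) = b at *
    rw [Real.norm_of_nonneg (by positivity), Real.norm_of_nonneg (by positivity)]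
    nlinarith
  · refine IsBigO.of_bound (1 / t + 1 / (1 - t)) ?_
    filter_upwards [hA, hB] with x ha hb
    generalize (∑ i, lam i * f i x) = a at *
    generalize (∑ i, mu i * f i x) = b at *
    rw [Real.norm_of_nonneg (by positivity), Real.norm_of_nonneg (by positivity)]
    have e : (1 / t + 1 / (1 - t)) * (t * a + (1 - t) * b)
        = a + b + ((1 - t) / t * b + t / (1 - t) * a) := by
      field_simp
      ring
    have : 0 ≤ (1 - t) / t * b + t / (1 - t) * a := by positivity
    linarith
end

section
/- Let C ⊆ ℝ^n be an open convex cone. Then C is sharp (its closure contains no affine line) if and only if its dual C* = {α ∈ (ℝ^n)* | α(x) < 0 for all x ∈ closure(C) \ {0}} is nonempty. -/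
/-- an open convex cone `C ⊆ ℝⁿ` is sharp (its closure contains no
affine line) iff its dual
`C* = {α | α x < 0 for all x ∈ closure C \ {0}}` is nonempty. -/
theorem stmt_7 (n : ℕ) (C : Set (Fin n → ℝ))
    (hCne : C.Nonempty) (hCopen : IsOpen C) (hCconv : Convex ℝ C)
    (hCcone : ∀ t : ℝ, 0 < t → ∀ x ∈ C, t • x ∈ C) :
    (¬ ∃ x v : Fin n → ℝ, v ≠ 0 ∧ ∀ t : ℝ, x + t • v ∈ closure C) ↔
      {α : (Fin n → ℝ) →ₗ[ℝ] ℝ | ∀ x ∈ closure C \ {0}, α x < 0}.Nonempty := by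
  have hKconv : Convex ℝ (closure C) := hCconv.closure
  have hKcone : ∀ t : ℝ, 0 < t → ∀ x ∈ closure C, t • x ∈ closure C := by
    intro t ht x hx
    exact map_mem_closure (continuous_const_smul t) hx (fun y hy => hCcone t ht y hy)
  constructor
  · intro hsharp
    have hline : ∀ x ∈ closure C, x ≠ 0 → -x ∉ closure C := by
      intro x hx hx0 hnx
      refine hsharp ⟨0, x, hx0, fun t => ?_⟩
      rw [zero_add]
      rcases lt_trichotomy t 0 with h | h | h
      · have := hKcone (-t) (by linarith) _ hnx
        simpa using this
      · subst h
        have := hKconv hx hnx (a := 1/2) (b := 1/2) (by norm_num) (by norm_num) (by norm_num)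
        simpa using this
      · exact hKcone t h x hx
    set S := closure C ∩ Metric.sphere (0 : Fin n → ℝ) 1 with hS
    have hScomp : IsCompact S := (isCompact_sphere _ _).inter_left isClosed_closure
    have h0K : (0 : Fin n → ℝ) ∈ closure C := by
      obtain ⟨c, hc⟩ := hCne
      have hlim : Filter.Tendsto (fun k : ℕ => (1 / ((k : ℝ) + 1)) • c) Filter.atTop
          (nhds ((0 : ℝ) • c)) :=
        tendsto_one_div_add_atTop_nhds_zero_nat.smul_const c
      rw [zero_smul] at hlim
      exact mem_closure_of_tendsto hlim
        (Filter.Eventually.of_forall fun k => hCcone _ (by positivity) c hc)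
    -- a functional nonnegative on the cone and positive on `S`, by compactness
    obtain ⟨f, hf0, hf⟩ : ∃ f : StrongDual ℝ (Fin n → ℝ),
        (∀ b ∈ closure C, 0 ≤ f b) ∧ ∀ b ∈ S, 0 < f b := by
      refine hScomp.induction_on (p := fun s => ∃ f : StrongDual ℝ (Fin n → ℝ),
        (∀ b ∈ closure C, 0 ≤ f b) ∧ ∀ b ∈ s ∩ closure C, 0 < f b) ?_ ?_ ?_ ?_ |>.imp ?_
      · exact ⟨0, by simp, by simp⟩
      · rintro s t hst ⟨f, h1, h2⟩
        exact ⟨f, h1, fun b hb => h2 b ⟨hst hb.1, hb.2⟩⟩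
      · rintro s t ⟨f, h1, h2⟩ ⟨g, h3, h4⟩
        refine ⟨f + g, fun b hb => add_nonneg (h1 b hb) (h3 b hb), ?_⟩
        rintro b ⟨hb | hb, hbC⟩
        · exact add_pos_of_pos_of_nonneg (h2 b ⟨hb, hbC⟩) (h3 b hbC)
        · exact add_pos_of_nonneg_of_pos (h1 b hbC) (h4 b ⟨hb, hbC⟩)
      · rintro x ⟨hx, hx1⟩
        have hx0 : x ≠ 0 := by
          rintro rfl
          simp at hx1
        obtain ⟨f, u, hu, hf⟩ := geometric_hahn_banach_point_closed
          hKconv isClosed_closure (hline x hx hx0)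
        have hu0 : u < 0 := by simpa using hf 0 h0K
        rw [map_neg] at hu
        refine ⟨{y | 0 < f y}, mem_nhdsWithin_of_mem_nhds
          ((isOpen_lt continuous_const f.continuous).mem_nhds
            (show 0 < f x by linarith)), f, ?_, fun b hb => hb.1⟩
        intro b hb
        by_contra hneg
        have hneg : f b < 0 := not_le.1 hneg
        have := hf _ (hKcone (u / f b) (div_pos_of_neg_of_neg hu0 hneg) b hb)
        rw [map_smul, smul_eq_mul, div_mul_cancel₀ _ hneg.ne] at this
        exact lt_irrefl _ this
      · rintro f ⟨h1, h2⟩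
        exact ⟨h1, fun b hb => h2 b ⟨hb, hb.1⟩⟩
    refine ⟨-(f : (Fin n → ℝ) →ₗ[ℝ] ℝ), ?_⟩
    rintro x ⟨hx, hx0⟩
    have hn : 0 < ‖x‖ := norm_pos_iff.2 hx0
    have hmem : ‖x‖⁻¹ • x ∈ S := by
      refine ⟨hKcone _ (inv_pos.2 hn) x hx, ?_⟩
      simp [norm_smul, hn.ne']
    have h1 := hf _ hmem
    rw [map_smul, smul_eq_mul] at h1
    have h2 : 0 < f x := by
      by_contra hneg
      have := mul_nonpos_of_nonneg_of_nonpos (inv_pos.2 hn).le (not_lt.1 hneg)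
      linarith
    simpa using h2
  · rintro ⟨α, hα⟩ ⟨x, v, hv, hxv⟩
    have key : ∀ w : Fin n → ℝ, (∀ t : ℝ, x + t • w ∈ closure C) → w ∈ closure C := by
      intro w hw
      have hlim : Filter.Tendsto (fun k : ℕ => (1 / ((k : ℝ) + 1)) • x + w) Filter.atTop
          (nhds ((0 : ℝ) • x + w)) :=
        (tendsto_one_div_add_atTop_nhds_zero_nat.smul_const x).add_const w
      rw [zero_smul, zero_add] at hlim
      refine isClosed_closure.mem_of_tendsto hlim (Filter.Eventually.of_forall fun k => ?_)
      have hk : (0 : ℝ) < (k : ℝ) + 1 := by positivity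
      have := hKcone (1 / ((k : ℝ) + 1)) (by positivity) _ (hw ((k : ℝ) + 1))
      rwa [smul_add, smul_smul, one_div_mul_cancel hk.ne', one_smul] at this
    have h1 := hα v ⟨key v hxv, hv⟩
    have h2 := hα (-v) ⟨key (-v) (fun t => by simpa using hxv (-t)), neg_ne_zero.2 hv⟩
    rw [map_neg] at h2
    linarith
end

section
/- Let C ⊆ ℝ^n be a sharp open convex cone and let C* = {α ∈ (ℝ^n)* | α(x) < 0 for all x ∈ closure(C) \ {0}} be its dual. Then the bidual equals C: the set {x ∈ ℝ^n | α(x) < 0 for all α ∈ closure(C*) \ {0}} is equal to C, where the closure of C* is taken in the dual space (ℝ^n)* with its canonical (finite-dimensional) topology. -/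
lemma cone_le_zero {n : ℕ} {K : Set (Fin n → ℝ)}
    (hK : ∀ t : ℝ, 0 < t → ∀ x ∈ K, t • x ∈ K) (f : (Fin n → ℝ) →L[ℝ] ℝ) (u : ℝ)
    (h : ∀ a ∈ K, f a ≤ u) : ∀ a ∈ K, f a ≤ 0 := by
  intro a ha
  by_contra! hlt
  have h1 := h _ (hK ((|u| + 1) / f a) (by positivity) a ha)
  rw [map_smul, smul_eq_mul, div_mul_cancel₀ _ hlt.ne'] at h1
  linarith [le_abs_self u]

/-- for a sharp open convex cone `C ⊆ ℝⁿ`, the bidual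
`{x | α x < 0 for all α ∈ closure(C*) \ {0}}` equals `C`, where
`C* = {α | α y < 0 for all y ∈ closure C \ {0}}` lies in the dual space. -/
theorem stmt_8 (n : ℕ) (C : Set (Fin n → ℝ))
    (hCne : C.Nonempty) (hCopen : IsOpen C) (hCconv : Convex ℝ C)
    (hCcone : ∀ t : ℝ, 0 < t → ∀ x ∈ C, t • x ∈ C)
    (hCsharp : ¬ ∃ x v : Fin n → ℝ, v ≠ 0 ∧ ∀ t : ℝ, x + t • v ∈ closure C) :
    {x : Fin n → ℝ |
      ∀ α ∈ closure {α : (Fin n → ℝ) →L[ℝ] ℝ | ∀ y ∈ closure C \ {0}, α y < 0} \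
        {(0 : (Fin n → ℝ) →L[ℝ] ℝ)}, α x < 0} = C := by
  have hKcone : ∀ t : ℝ, 0 < t → ∀ x ∈ closure C, t • x ∈ closure C := fun t ht x hx =>
    map_mem_closure (continuous_const_smul t) hx (fun a ha => hCcone t ht a ha)
  have h0 : (0 : Fin n → ℝ) ∈ closure C := by
    obtain ⟨a, ha⟩ := hCne
    have ht : Filter.Tendsto (fun k : ℕ => (1 / ((k : ℝ) + 1)) • a) Filter.atTop (nhds 0) := by
      simpa using (tendsto_one_div_add_atTop_nhds_zero_nat (𝕜 := ℝ)).smul_const a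
    exact mem_closure_of_tendsto ht
      (Filter.Eventually.of_forall fun k => hCcone _ (by positivity) a ha)
  have hneg : ∀ y ∈ closure C, y ≠ 0 → -y ∉ closure C := by
    intro y hy hy0 hny
    refine hCsharp ⟨0, y, hy0, fun t => ?_⟩
    rw [zero_add]
    rcases lt_trichotomy t 0 with ht | rfl | ht
    · have := hKcone (-t) (by linarith) _ hny
      simpa using this
    · simpa using h0
    · exact hKcone t ht y hy
  -- a strictly negative functional
  obtain ⟨β, hβ, hβ'⟩ : ∃ f : (Fin n → ℝ) →L[ℝ] ℝ, (∀ a ∈ closure C, f a ≤ 0) ∧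
      ∀ a ∈ closure C ∩ Metric.sphere 0 1, f a < 0 := by
    have hcomp : IsCompact (closure C ∩ Metric.sphere (0 : Fin n → ℝ) 1) :=
      (isCompact_sphere _ _).inter_left isClosed_closure
    refine hcomp.induction_on
      (p := fun s => ∃ f : (Fin n → ℝ) →L[ℝ] ℝ, (∀ a ∈ closure C, f a ≤ 0) ∧
        ∀ a ∈ closure C ∩ s, f a < 0) ?_ ?_ ?_ ?_ |>.imp ?_
    · exact ⟨0, by simp, by simp⟩
    · rintro s t hst ⟨f, hf, hf'⟩
      exact ⟨f, hf, fun a ha => hf' a ⟨ha.1, hst ha.2⟩⟩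
    · rintro s t ⟨f, hf, hf'⟩ ⟨g, hg, hg'⟩
      refine ⟨f + g, fun a ha => add_nonpos (hf a ha) (hg a ha), ?_⟩
      rintro a ⟨ha, has | hat⟩
      · exact add_neg_of_neg_of_nonpos (hf' a ⟨ha, has⟩) (hg a ha)
      · exact add_neg_of_nonpos_of_neg (hf a ha) (hg' a ⟨ha, hat⟩)
    · rintro y ⟨hy, hys⟩
      have hy0 : y ≠ 0 := by
        rintro rfl
        simp at hys
      obtain ⟨f, u, hfu, huf⟩ := geometric_hahn_banach_closed_point hCconv.closure
        isClosed_closure (hneg y hy hy0)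
      have hu := hfu 0 h0
      rw [map_zero] at hu
      rw [map_neg] at huf
      refine ⟨{a | f a < 0}, mem_nhdsWithin_of_mem_nhds
        ((isOpen_lt f.continuous continuous_const).mem_nhds ?_), f,
        cone_le_zero hKcone f u (fun a ha => (hfu a ha).le), fun a ha => ha.2⟩
      show f y < 0
      linarith
    · rintro f ⟨hf, hf'⟩
      exact ⟨hf, fun a ha => hf' a ⟨ha.1, ha⟩⟩
  have hβs : ∀ y ∈ closure C \ {0}, β y < 0 := by
    rintro y ⟨hy, hy0⟩
    have hy0 : y ≠ 0 := hy0
    have hn : 0 < ‖y‖ := norm_pos_iff.mpr hy0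
    have h1 := hβ' (‖y‖⁻¹ • y) ⟨hKcone _ (by positivity) y hy, by
      simp [norm_smul, hn.ne']⟩
    rw [map_smul, smul_eq_mul] at h1
    by_contra! hc
    have : 0 ≤ ‖y‖⁻¹ * β y := by positivity
    linarith
  ext x
  simp only [Set.mem_setOf_eq]
  constructor
  · intro hx
    by_contra hxC
    obtain ⟨f, hf⟩ := geometric_hahn_banach_open_point hCconv hCopen hxC
    have hle : ∀ a ∈ closure C, f a ≤ f x := fun a ha =>
      closure_minimal (fun b hb => (hf b hb).le)
        (isClosed_le f.continuous continuous_const) ha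
    have hfx : 0 ≤ f x := by simpa using hle 0 h0
    have hf0 := cone_le_zero hKcone f _ hle
    refine absurd (hx f ⟨?_, ?_⟩) (not_lt.mpr hfx)
    · have ht : Filter.Tendsto (fun k : ℕ => f + (1 / ((k : ℝ) + 1)) • β)
          Filter.atTop (nhds f) := by
        simpa using ((tendsto_one_div_add_atTop_nhds_zero_nat (𝕜 := ℝ)).smul_const β).const_add f
      refine mem_closure_of_tendsto ht (Filter.Eventually.of_forall fun k y hy => ?_)
      have h2 : (1 / ((k : ℝ) + 1)) * β y < 0 :=
        mul_neg_of_pos_of_neg (by positivity) (hβs y hy)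
      exact add_neg_of_nonpos_of_neg (hf0 y hy.1) h2
    · rintro rfl
      obtain ⟨a, ha⟩ := hCne
      simpa using hf a ha
  · rintro hx α ⟨hα, hα0⟩
    have hα0 : α ≠ 0 := hα0
    have hle : ∀ y ∈ C, α y ≤ 0 := by
      intro y hy
      refine closure_minimal (t := {γ : (Fin n → ℝ) →L[ℝ] ℝ | γ y ≤ 0}) (fun γ hγ => ?_)
        (isClosed_le (by fun_prop) continuous_const) hα
      by_cases hy0 : y = 0
      · simp [hy0]
      · exact (hγ y ⟨subset_closure hy, hy0⟩).le
    obtain ⟨v, hv⟩ : ∃ v, 0 < α v := by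
      by_contra! hc
      refine hα0 (ContinuousLinearMap.ext fun v => le_antisymm (hc v) ?_)
      have := hc (-v)
      rw [map_neg] at this
      simpa using this
    have ht : Filter.Tendsto (fun k : ℕ => x + (1 / ((k : ℝ) + 1)) • v)
        Filter.atTop (nhds x) := by
      simpa using ((tendsto_one_div_add_atTop_nhds_zero_nat (𝕜 := ℝ)).smul_const v).const_add x
    obtain ⟨k, hk⟩ := (ht.eventually (hCopen.mem_nhds hx)).exists
    have h3 := hle _ hk
    rw [map_add, map_smul, smul_eq_mul] at h3
    have : 0 < (1 / ((k : ℝ) + 1)) * α v := by positivity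
    linarith
end

section
/- Let C ⊆ ℝ^n be a sharp open convex cone with dual C* = {α ∈ (ℝ^n)* | α(x) < 0 for all x ∈ closure(C) \ {0}}. Then the following are equivalent: (i) for every x ∈ frontier(C) \ {0} and all nonzero α, β ∈ (ℝ^n)* satisfying α(y) ≤ 0 and β(y) ≤ 0 for all y ∈ closure(C) and α(x) = β(x) = 0, there exists c > 0 with β = c • α (uniqueness, up to positive scalar, of supporting hyperplanes: C is C¹); (ii) for all linearly independent α, β ∈ frontier(C*) \ {0} and every t ∈ (0,1), t • α + (1−t) • β ∈ C* (strict convexity of the dual cone C*). -/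
theorem exists_neg_functional (n : ℕ) (K : Set (Fin n → ℝ)) (hcl : IsClosed K)
    (hconv : Convex ℝ K) (hcone : ∀ t : ℝ, 0 < t → ∀ x ∈ K, t • x ∈ K)
    (hsharp : ∀ x ∈ K, -x ∈ K → x = 0) :
    ∃ γ : (Fin n → ℝ) →L[ℝ] ℝ, ∀ y ∈ K \ {0}, γ y < 0 := by
  have hcomp : IsCompact (K ∩ Metric.sphere 0 1) := (isCompact_sphere 0 1).inter_left hcl
  have key : ∃ f : (Fin n → ℝ) →L[ℝ] ℝ, (∀ y ∈ K, f y ≤ 0) ∧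
      ∀ y ∈ K ∩ Metric.sphere 0 1, f y < 0 := by
    suffices h : ∃ f : (Fin n → ℝ) →L[ℝ] ℝ, (∀ y ∈ K, f y ≤ 0) ∧
        ∀ y ∈ K ∩ Metric.sphere 0 1, y ∈ K → f y < 0 by
      obtain ⟨f, hf, hf'⟩ := h
      exact ⟨f, hf, fun y hy => hf' y hy hy.1⟩
    refine hcomp.induction_on (p := fun s => ∃ f : (Fin n → ℝ) →L[ℝ] ℝ, (∀ y ∈ K, f y ≤ 0) ∧
      ∀ y ∈ s, y ∈ K → f y < 0) ?_ ?_ ?_ ?_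
    · exact ⟨0, by simp, by simp⟩
    · rintro s t hst ⟨f, hf, hf'⟩
      exact ⟨f, hf, fun y hy => hf' y (hst hy)⟩
    · rintro s t ⟨f, hf, hf'⟩ ⟨g, hg, hg'⟩
      refine ⟨f + g, fun y hy => ?_, fun y hy hyK => ?_⟩
      · have h1 := hf y hy
        have h2 := hg y hy
        simp only [add_apply]
        linarith
      · have h1 := hf y hyK
        have h2 := hg y hyK
        simp only [add_apply]
        rcases hy with hy | hy
        · have := hf' y hy hyK
          linarith
        · have := hg' y hy hyK
          linarith
    · rintro x ⟨hx, hx1⟩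
      have hx0 : x ≠ 0 := by
        rintro rfl
        simp at hx1
      obtain ⟨f, u, hfu, hu⟩ := geometric_hahn_banach_closed_point hconv hcl
        (fun h => hx0 (hsharp x hx h))
      have hfx : f x < 0 := by
        have := hfu x hx
        rw [map_neg] at hu
        linarith
      refine ⟨{y | f y < 0}, mem_nhdsWithin_of_mem_nhds
        ((isOpen_lt f.continuous continuous_const).mem_nhds hfx), f, fun y hy => ?_,
        fun y hy _ => hy⟩
      by_contra hpos
      push Not at hpos
      have h1 := hfu y hy
      have h2 := hfu _ (hcone (u / f y) (div_pos (hpos.trans h1) hpos) y hy)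
      rw [map_smul, smul_eq_mul, div_mul_cancel₀ _ hpos.ne'] at h2
      exact lt_irrefl _ h2
  obtain ⟨f, -, hf⟩ := key
  refine ⟨f, ?_⟩
  rintro y ⟨hy, hy0⟩
  have hyn : 0 < ‖y‖ := norm_pos_iff.2 hy0
  have h1 := hf (‖y‖⁻¹ • y) ⟨hcone _ (inv_pos.2 hyn) y hy, by
    simp [norm_smul, hyn.ne']⟩
  rw [map_smul, smul_eq_mul] at h1
  by_contra hle
  have := mul_nonneg (inv_pos.2 hyn).le (not_lt.1 hle)
  linarith

theorem neg_on_open {n : ℕ} {C : Set (Fin n → ℝ)} (hCopen : IsOpen C)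
    {α : (Fin n → ℝ) →L[ℝ] ℝ} (hα : α ≠ 0) (h : ∀ y ∈ closure C, α y ≤ 0)
    {x : Fin n → ℝ} (hx : x ∈ C) : α x < 0 := by
  refine lt_of_le_of_ne (h x (subset_closure hx)) fun h0 => hα ?_
  have hm : IsLocalMax α x := by
    filter_upwards [hCopen.mem_nhds hx] with y hy
    rw [h0]
    exact h y (subset_closure hy)
  exact hm.hasFDerivAt_eq_zero α.hasFDerivAt

/-- for a sharp open convex cone `C ⊆ ℝⁿ` with dual `C*`, the cone
`C` is `C¹` (supporting functionals at boundary points are unique up to positive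
scalar) iff the dual cone `C*` is strictly convex. -/
theorem stmt_9 (n : ℕ) (C : Set (Fin n → ℝ))
    (hCne : C.Nonempty) (hCopen : IsOpen C) (hCconv : Convex ℝ C)
    (hCcone : ∀ t : ℝ, 0 < t → ∀ x ∈ C, t • x ∈ C)
    (hCsharp : ¬ ∃ x v : Fin n → ℝ, v ≠ 0 ∧ ∀ t : ℝ, x + t • v ∈ closure C) :
    (∀ x ∈ frontier C \ {0}, ∀ α β : (Fin n → ℝ) →L[ℝ] ℝ, α ≠ 0 → β ≠ 0 →
        (∀ y ∈ closure C, α y ≤ 0) → (∀ y ∈ closure C, β y ≤ 0) →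
        α x = 0 → β x = 0 → ∃ c : ℝ, 0 < c ∧ β = c • α) ↔
      (∀ α ∈ frontier {α : (Fin n → ℝ) →L[ℝ] ℝ | ∀ y ∈ closure C \ {0}, α y < 0} \ {0},
        ∀ β ∈ frontier {α : (Fin n → ℝ) →L[ℝ] ℝ | ∀ y ∈ closure C \ {0}, α y < 0} \ {0},
        LinearIndependent ℝ ![α, β] → ∀ t ∈ Set.Ioo (0 : ℝ) 1,
          t • α + (1 - t) • β ∈
            {α : (Fin n → ℝ) →L[ℝ] ℝ | ∀ y ∈ closure C \ {0}, α y < 0}) := by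
  have hKcone : ∀ t : ℝ, 0 < t → ∀ x ∈ closure C, t • x ∈ closure C := by
    intro t ht x hx
    exact map_mem_closure (continuous_const_smul t) hx (fun y hy => hCcone t ht y hy)
  have hKsharp : ∀ x ∈ closure C, -x ∈ closure C → x = 0 := by
    intro x hx hnx
    by_contra h0
    refine hCsharp ⟨0, x, h0, fun t => ?_⟩
    rw [zero_add]
    rcases lt_trichotomy t 0 with ht | ht | ht
    · have := hKcone (-t) (by linarith) _ hnx
      simpa using this
    · have := hCconv.closure hx hnx (by norm_num : (0:ℝ) ≤ 1/2) (by norm_num : (0:ℝ) ≤ 1/2)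
        (by norm_num)
      simpa [ht] using this
    · exact hKcone t ht x hx
  obtain ⟨γ, hγ⟩ := exists_neg_functional n (closure C) isClosed_closure hCconv.closure
    hKcone hKsharp
  have hle : ∀ α ∈ closure {α : (Fin n → ℝ) →L[ℝ] ℝ | ∀ y ∈ closure C \ {0}, α y < 0},
      ∀ y ∈ closure C, α y ≤ 0 := by
    intro α hα y hy
    have hc : IsClosed {α : (Fin n → ℝ) →L[ℝ] ℝ | α y ≤ 0} :=
      isClosed_le (by fun_prop) continuous_const
    refine closure_minimal ?_ hc hα
    intro δ hδ
    by_cases h0 : y = 0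
    · simp [h0]
    · exact (hδ y ⟨hy, h0⟩).le
  constructor
  · rintro H α ⟨hα, hα0⟩ β ⟨hβ, hβ0⟩ hli t ⟨ht0, ht1⟩ y ⟨hy, hy0⟩
    have ha := hle α hα.1
    have hb := hle β hβ.1
    have hay := ha y hy
    have hby := hb y hy
    simp only [add_apply, smul_apply, smul_eq_mul]
    by_contra hcon
    have h1 : α y = 0 := by nlinarith
    have h2 : β y = 0 := by nlinarith
    have hyC : y ∉ C := fun hyC => (neg_on_open hCopen hα0 ha hyC).ne h1
    obtain ⟨c, hc, rfl⟩ := H y ⟨⟨hy, by rwa [hCopen.interior_eq]⟩, hy0⟩ α β hα0 hβ0 ha hb h1 h2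
    have := LinearIndependent.pair_iff.1 hli c (-1) (by simp)
    exact hc.ne' this.1
  · rintro H x ⟨hx, hx0⟩ α β hα0 hβ0 ha hb hax hbx
    have hfr : ∀ δ : (Fin n → ℝ) →L[ℝ] ℝ, (∀ y ∈ closure C, δ y ≤ 0) → δ x = 0 →
        δ ∈ frontier {α : (Fin n → ℝ) →L[ℝ] ℝ | ∀ y ∈ closure C \ {0}, α y < 0} := by
      intro δ hδ hδx
      refine ⟨?_, fun hi => (interior_subset hi x ⟨hx.1, hx0⟩).ne hδx⟩
      have hcont : ContinuousWithinAt (fun ε : ℝ => δ + ε • γ) (Set.Ioi 0) 0 := by fun_prop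
      have h0 : (0 : ℝ) ∈ closure (Set.Ioi (0 : ℝ)) := by simp
      have := hcont.mem_closure (t := {α : (Fin n → ℝ) →L[ℝ] ℝ | ∀ y ∈ closure C \ {0}, α y < 0})
        h0 (by
          intro ε hε y hy
          have h1 := hδ y hy.1
          have h2 := mul_neg_of_pos_of_neg (Set.mem_Ioi.1 hε) (hγ y hy)
          simp only [add_apply, smul_apply, smul_eq_mul]
          linarith)
      simpa using this
    have hdep : ¬ LinearIndependent ℝ ![α, β] := by
      intro hli
      have := H α ⟨hfr α ha hax, hα0⟩ β ⟨hfr β hb hbx, hβ0⟩ hli (1/2) (by norm_num)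
        x ⟨hx.1, hx0⟩
      simp [hax, hbx] at this
    rw [LinearIndependent.pair_iff' hα0] at hdep
    push Not at hdep
    obtain ⟨c, hc⟩ := hdep
    refine ⟨c, ?_, hc.symm⟩
    obtain ⟨z, hz⟩ := hCne
    have h1 := neg_on_open hCopen hα0 ha hz
    have h2 := neg_on_open hCopen hβ0 hb hz
    rw [← hc, smul_apply, smul_eq_mul] at h2
    by_contra hcn
    nlinarith
end

section
/- Let k ≥ 2 and let f : ℝ^k → ℝ be continuous. Then f is proper (the preimage of every compact set is compact; equivalently, |f| tends to +∞ along the cocompact filter of ℝ^k) if and only if f tends to +∞ along the cocompact filter of ℝ^k or f tends to −∞ along the cocompact filter of ℝ^k. -/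
open Filter

theorem conn_aux {E : Type*} [NormedAddCommGroup E] [NormedSpace ℝ E]
    (h : 1 < Module.rank ℝ E) (R : ℝ) (hR : 0 ≤ R) : IsPreconnected {x : E | R < ‖x‖} := by
  have h0 := (isConnected_compl_singleton_of_one_lt_rank h (0 : E)).isPreconnected
  have hc : ContinuousOn (fun x : E => (1 + R / ‖x‖) • x) ({0}ᶜ : Set E) := by
    refine ContinuousOn.smul (continuousOn_const.add
      (continuousOn_const.div continuous_norm.continuousOn ?_)) continuousOn_id
    intro x hx
    simpa using hx
  have h1 := h0.image _ hc
  convert h1 using 1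
  ext y
  simp only [Set.mem_ofPred_eq, Set.mem_image, Set.mem_compl_iff, Set.mem_singleton_iff]
  constructor
  · intro hy
    have hy0 : 0 < ‖y‖ := hR.trans_lt hy
    have hp : 0 < 1 - R / ‖y‖ := by
      rw [sub_pos, div_lt_one hy0]; exact hy
    refine ⟨(1 - R / ‖y‖) • y, smul_ne_zero hp.ne' (norm_pos_iff.1 hy0), ?_⟩
    have hn : ‖(1 - R / ‖y‖) • y‖ = ‖y‖ - R := by
      rw [norm_smul, Real.norm_of_nonneg hp.le]; field_simp
    rw [hn, smul_smul]
    have h3 : ‖y‖ - R ≠ 0 := (sub_pos.2 hy).ne'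
    have : (1 + R / (‖y‖ - R)) * (1 - R / ‖y‖) = 1 := by
      field_simp
      ring
    rw [this, one_smul]
  · rintro ⟨x, hx, rfl⟩
    have hx0 : 0 < ‖x‖ := norm_pos_iff.2 hx
    rw [norm_smul, Real.norm_of_nonneg (by positivity), add_mul, div_mul_cancel₀ _ hx0.ne']
    linarith

/-- a continuous function `f : ℝᵏ → ℝ` (`k ≥ 2`) is proper iff it
tends to `+∞` or to `-∞` along the cocompact filter of `ℝᵏ`. -/
theorem stmt_10 (k : ℕ) (hk : 2 ≤ k) (f : (Fin k → ℝ) → ℝ) (hf : Continuous f) :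
    Tendsto f (cocompact (Fin k → ℝ)) (cocompact ℝ) ↔
      Tendsto f (cocompact (Fin k → ℝ)) atTop ∨
      Tendsto f (cocompact (Fin k → ℝ)) atBot := by
  constructor
  · intro h
    have habs : Tendsto (fun x => |f x|) (cocompact (Fin k → ℝ)) atTop :=
      (tendsto_norm_cocompact_atTop (E := ℝ)).comp h
    have hrank : 1 < Module.rank ℝ (Fin k → ℝ) := by
      rw [rank_fin_fun]; exact_mod_cast hk
    have h1 := habs.eventually (eventually_gt_atTop 0)
    rw [← Metric.cobounded_eq_cocompact] at h1 habs ⊢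
    obtain ⟨R, -, hR⟩ := (Metric.hasBasis_cobounded_compl_closedBall (0 : Fin k → ℝ)).eventually_iff.1 h1
    have hne : ∀ x : Fin k → ℝ, max R 0 < ‖x‖ → f x ≠ 0 := by
      intro x hx
      have := @hR x (by simpa using (le_max_left R 0).trans_lt hx)
      simpa using this
    have hev : ∀ᶠ x in Bornology.cobounded (Fin k → ℝ), max R 0 < ‖x‖ :=
      tendsto_norm_cobounded_atTop.eventually (eventually_gt_atTop _)
    have hS := (conn_aux hrank (max R 0) (le_max_right _ _)).image f hf.continuousOn
    by_cases hpos : ∀ x : Fin k → ℝ, max R 0 < ‖x‖ → 0 < f x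
    · left
      refine habs.congr' ?_
      filter_upwards [hev] with x hx using abs_of_pos (hpos x hx)
    · right
      push Not at hpos
      obtain ⟨a, ha, hfa⟩ := hpos
      refine (tendsto_neg_atTop_atBot.comp habs).congr' ?_
      filter_upwards [hev] with x hx
      have : f x ≤ 0 := by
        by_contra! hc
        obtain ⟨z, hz, hz0⟩ := hS.ordConnected.out ⟨a, ha, rfl⟩ ⟨x, hx, rfl⟩ ⟨hfa, hc.le⟩
        exact hne z hz hz0
      simp [abs_of_nonpos this]
  · rw [cocompact_eq_atBot_atTop (α := ℝ)]
    rintro (h | h)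
    · exact h.mono_right le_sup_right
    · exact h.mono_right le_sup_left
end

section
/- Let C ⊆ ℝ^n be a sharp open convex cone that is strictly convex, meaning that for all linearly independent a, b ∈ frontier(C) \ {0} and all t ∈ (0,1) one has t • a + (1−t) • b ∈ C. Let g ∈ GL(n,ℝ) satisfy g · C = C, and let x, y, z ∈ frontier(C) \ {0} be pairwise linearly independent vectors that are eigenvectors of g: g x = λ₁ • x, g y = λ₂ • y, g z = λ₃ • z for real numbers λ₁, λ₂, λ₃. Then λ₁ = λ₂ = λ₃. -/
theorem stmt_11_key {E : Type*} [NormedAddCommGroup E] [NormedSpace ℝ E] (C : Set E)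
    (hCopen : IsOpen C) (hCconv : Convex ℝ C)
    (hCcone : ∀ t : ℝ, 0 < t → ∀ x ∈ C, t • x ∈ C)
    (g : E →ₗ[ℝ] E) (hg : ∀ v ∈ C, g v ∈ C) (x y z : E) (hy : y ∈ frontier C)
    (hxy : x + y ∈ C) (hyz : y + z ∈ C) (l₁ l₂ l₃ : ℝ)
    (hgx : g x = l₁ • x) (hgy : g y = l₂ • y) (hgz : g z = l₃ • z) : l₁ ≤ l₃ := by
  have hyC : y ∉ C := by
    rw [hCopen.frontier_eq] at hy
    exact hy.2
  obtain ⟨f, hf⟩ := geometric_hahn_banach_open_point hCconv hCopen hyC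
  have h1 : f y ≤ 0 := by
    have : closure C ⊆ {a | 2 * f a ≤ f y} := by
      refine closure_minimal (fun a ha => ?_) (isClosed_le (by fun_prop) (by fun_prop))
      have := hf _ (hCcone 2 two_pos a ha)
      simp only [map_smul, smul_eq_mul] at this
      exact this.le
    have := this hy.1
    simp only [Set.mem_ofPred_eq] at this
    linarith
  have h2 : f y = 0 := by
    by_contra h
    have h3 : f y < 0 := lt_of_le_of_ne h1 h
    have h4 := hf _ hxy
    have h5 : f (x + y) < 0 := h4.trans h3
    have h6 := hf _ (hCcone (f y / (2 * f (x + y))) (div_pos_of_neg_of_neg h3 (by linarith)) _ hxy)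
    rw [map_smul, smul_eq_mul] at h6
    have : f y / (2 * f (x + y)) * f (x + y) = f y / 2 := by
      have := h5.ne
      field_simp
    linarith
  rw [h2] at hf
  have hfx : f x < 0 := by simpa [h2] using hf _ hxy
  have hfz : f z < 0 := by simpa [h2] using hf _ hyz
  have hl1 : 0 < l₁ := by
    have := hf _ (hg _ hxy)
    simp only [map_add, hgx, hgy, map_smul, smul_eq_mul, h2] at this
    nlinarith
  have hl3 : 0 < l₃ := by
    have := hf _ (hg _ hyz)
    simp only [map_add, hgz, hgy, map_smul, smul_eq_mul, h2] at this
    nlinarith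
  by_contra! hlt
  obtain ⟨e, he, heC⟩ : ∃ e : ℝ, 0 < e ∧ y + z - e • x ∈ C := by
    have hc : Continuous (fun e : ℝ => y + z - e • x) := by fun_prop
    have : ∀ᶠ e in nhds (0:ℝ), y + z - e • x ∈ C :=
      hc.continuousAt.eventually_mem (hCopen.mem_nhds (by simpa using hyz))
    have hev : ∀ᶠ e in nhdsWithin (0:ℝ) (Set.Ioi 0), y + z - e • x ∈ C :=
      this.filter_mono nhdsWithin_le_nhds
    obtain ⟨e, h, h0⟩ := (hev.and self_mem_nhdsWithin).exists
    exact ⟨e, h0, h⟩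
  have hk : ∀ k : ℕ, l₂ ^ k • y + l₃ ^ k • z - (e * l₁ ^ k) • x ∈ C := by
    intro k
    induction k with
    | zero => simpa using heC
    | succ k ih =>
      have := hg _ ih
      simp only [map_add, map_sub, map_smul, hgx, hgy, hgz, smul_smul] at this
      simpa only [pow_succ, mul_assoc] using this
  have hq : ∀ k : ℕ, e * f x / f z < (l₃ / l₁) ^ k := by
    intro k
    have := hf _ (hk k)
    simp only [map_add, map_sub, map_smul, smul_eq_mul, h2] at this
    rw [div_pow, lt_div_iff₀ (by positivity), div_mul_eq_mul_div, div_lt_iff_of_neg hfz]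
    linarith
  obtain ⟨k, hkk⟩ := exists_pow_lt_of_lt_one (x := e * f x / f z) (y := l₃ / l₁)
    (div_pos_of_neg_of_neg (by nlinarith) hfz) ((div_lt_one hl1).2 hlt)
  exact (hq k).not_gt hkk

/-- if `C ⊆ ℝⁿ` is a strictly convex sharp open convex cone
preserved by `g ∈ GL(n,ℝ)`, and `x, y, z ∈ frontier C \ {0}` are pairwise
linearly independent eigenvectors of `g` with eigenvalues `λ₁, λ₂, λ₃`, then
`λ₁ = λ₂ = λ₃`. -/
theorem stmt_11 (n : ℕ) (C : Set (Fin n → ℝ))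
    (hCne : C.Nonempty) (hCopen : IsOpen C) (hCconv : Convex ℝ C)
    (hCcone : ∀ t : ℝ, 0 < t → ∀ x ∈ C, t • x ∈ C)
    (hCsharp : ¬ ∃ x v : Fin n → ℝ, v ≠ 0 ∧ ∀ t : ℝ, x + t • v ∈ closure C)
    (hCstrict : ∀ a ∈ frontier C \ {0}, ∀ b ∈ frontier C \ {0},
      LinearIndependent ℝ ![a, b] → ∀ t ∈ Set.Ioo (0 : ℝ) 1, t • a + (1 - t) • b ∈ C)
    (g : Matrix.GeneralLinearGroup (Fin n) ℝ)
    (hg : (fun v => Matrix.mulVec (g : Matrix (Fin n) (Fin n) ℝ) v) '' C = C)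
    (x y z : Fin n → ℝ)
    (hx : x ∈ frontier C \ {0}) (hy : y ∈ frontier C \ {0}) (hz : z ∈ frontier C \ {0})
    (hxy : LinearIndependent ℝ ![x, y]) (hxz : LinearIndependent ℝ ![x, z])
    (hyz : LinearIndependent ℝ ![y, z])
    (l₁ l₂ l₃ : ℝ)
    (hgx : Matrix.mulVec (g : Matrix (Fin n) (Fin n) ℝ) x = l₁ • x)
    (hgy : Matrix.mulVec (g : Matrix (Fin n) (Fin n) ℝ) y = l₂ • y)
    (hgz : Matrix.mulVec (g : Matrix (Fin n) (Fin n) ℝ) z = l₃ • z) :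
    l₁ = l₂ ∧ l₂ = l₃ := by
  have hsum : ∀ a ∈ frontier C \ {0}, ∀ b ∈ frontier C \ {0},
      LinearIndependent ℝ ![a, b] → a + b ∈ C := by
    intro a ha b hb hab
    have := hCcone 2 two_pos _ (hCstrict a ha b hb hab (1/2) (by norm_num))
    rw [smul_add, smul_smul, smul_smul] at this
    norm_num at this
    exact this
  have hgC : ∀ v ∈ C, Matrix.mulVecLin (g : Matrix (Fin n) (Fin n) ℝ) v ∈ C := by
    intro v hv
    rw [← hg]
    exact ⟨v, hv, rfl⟩
  have axy := hsum x hx y hy hxy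
  have axz := hsum x hx z hz hxz
  have ayz := hsum y hy z hz hyz
  have ayx : y + x ∈ C := by rwa [add_comm]
  have azx : z + x ∈ C := by rwa [add_comm]
  have azy : z + y ∈ C := by rwa [add_comm]
  have key := stmt_11_key C hCopen hCconv hCcone _ hgC
  exact ⟨le_antisymm (key x z y hz.1 axz azy _ _ _ hgx hgz hgy)
      (key y z x hz.1 ayz azx _ _ _ hgy hgz hgx),
    le_antisymm (key y x z hx.1 ayx axz _ _ _ hgy hgx hgz)
      (key z x y hx.1 azx axy _ _ _ hgz hgx hgy)⟩
end

section
/- Let B be a group and A a normal subgroup of B. If A is virtually solvable and the quotient group B/A is virtually solvable, then B is virtually solvable. -/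
theorem aux_sup {G : Type*} [Group G] (M N : Subgroup G) [N.Normal]
    [hM : Group.IsSolvable M] [hN : Group.IsSolvable N] : Group.IsSolvable (M ⊔ N : Subgroup G) := by
  have e := QuotientGroup.quotientInfEquivProdNormalQuotient M N
  have h1 : Group.IsSolvable (↥(M ⊔ N) ⧸ N.subgroupOf (M ⊔ N)) :=
    Group.isSolvable_of_surjective (f := e.toMonoidHom) e.surjective
  refine Group.isSolvable_of_ker_le_range (Subgroup.inclusion (le_sup_right : N ≤ M ⊔ N))
    (QuotientGroup.mk' (N.subgroupOf (M ⊔ N))) ?_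
  intro x hx
  rw [QuotientGroup.ker_mk'] at hx
  exact ⟨⟨x.1, hx⟩, rfl⟩

theorem aux_char {G : Type*} [Group G]
    (h : ∃ H : Subgroup G, H.FiniteIndex ∧ Group.IsSolvable H) :
    ∃ H : Subgroup G, H.Characteristic ∧ H.FiniteIndex ∧ Group.IsSolvable H := by
  classical
  obtain ⟨H, hf, hs⟩ := h
  have hex : ∃ n, ∃ N : Subgroup G, N.Normal ∧ N.FiniteIndex ∧ Group.IsSolvable N ∧ N.index = n :=
    ⟨_, H.normalCore, inferInstance, inferInstance,
      Group.isSolvable_of_isSolvable_injective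
        (f := Subgroup.inclusion H.normalCore_le) (Subgroup.inclusion_injective _), rfl⟩
  obtain ⟨N, hN, hNf, hNs, hNi⟩ := Nat.find_spec hex
  refine ⟨N, ?_, hNf, hNs⟩
  rw [Subgroup.characteristic_iff_map_le]
  intro φ
  have hMn : (N.map φ.toMonoidHom).Normal := hN.map _ φ.surjective
  have hMs : Group.IsSolvable (N.map φ.toMonoidHom) :=
    Group.isSolvable_of_surjective (f := φ.toMonoidHom.subgroupMap N)
      (φ.toMonoidHom.subgroupMap_surjective N)
  have hS := aux_sup (N.map φ.toMonoidHom) N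
  by_contra hle
  have hlt : N < N.map φ.toMonoidHom ⊔ N :=
    lt_of_le_of_ne le_sup_right (fun h => hle (le_sup_left.trans_eq h.symm))
  have h1 := Subgroup.index_strictAnti hlt
  rw [hNi] at h1
  exact Nat.find_min hex h1 ⟨_, inferInstance, Subgroup.finiteIndex_of_le hlt.le, hS, rfl⟩

/-- an extension of a virtually solvable group by a virtually
solvable group is virtually solvable. -/
theorem stmt_12 (B : Type*) [Group B] (A : Subgroup B) [A.Normal]
    (hA : ∃ H : Subgroup A, H.FiniteIndex ∧ IsSolvable H)
    (hQ : ∃ H : Subgroup (B ⧸ A), H.FiniteIndex ∧ IsSolvable H) :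
    ∃ H : Subgroup B, H.FiniteIndex ∧ IsSolvable H := by
  obtain ⟨R, hRc, hRf, hRs⟩ := aux_char hA
  obtain ⟨Q, hQf, hQs⟩ := hQ
  have hQs2 : Group.IsSolvable Q := hQs
  have hRn : (R.map A.subtype).Normal := inferInstance
  let p := QuotientGroup.mk' (R.map A.subtype)
  let F : Subgroup (B ⧸ R.map A.subtype) := A.map p
  have hFn : F.Normal := Subgroup.Normal.map inferInstance p (QuotientGroup.mk'_surjective _)
  have hFf : Finite F := by
    have hk : ∀ x : A, x ∈ R → (p.subgroupMap A) x = 1 := by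
      intro x hx
      apply Subtype.ext
      exact (QuotientGroup.eq_one_iff _).2 ⟨x, hx, rfl⟩
    refine Finite.of_surjective (QuotientGroup.lift R (p.subgroupMap A) hk) ?_
    intro y
    obtain ⟨x, hx⟩ := p.subgroupMap_surjective A y
    exact ⟨QuotientGroup.mk x, hx⟩
  let f : B →* MulAut F := (MulAut.conjNormal (H := F)).comp p
  have : Finite (MulAut F) := Finite.of_injective (fun e : MulAut F => (e : F → F))
    DFunLike.coe_injective
  have hkf : f.ker.FiniteIndex := Subgroup.finiteIndex_ker f
  have hqf : (Q.comap (QuotientGroup.mk' A)).FiniteIndex := by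
    constructor
    rw [Q.index_comap_of_surjective (QuotientGroup.mk'_surjective A)]
    exact hQf.index_ne_zero
  refine ⟨f.ker ⊓ Q.comap (QuotientGroup.mk' A), inferInstance, ?_⟩
  have hcomm : ∀ b ∈ f.ker, ∀ a ∈ A, p b * p a = p a * p b := by
    intro b hb a ha
    have h1 := DFunLike.congr_fun (MonoidHom.mem_ker.1 hb) (⟨p a, a, ha, rfl⟩ : F)
    have h2 : p b * p a * (p b)⁻¹ = p a := congrArg Subtype.val h1
    exact mul_inv_eq_iff_eq_mul.1 h2
  let K : Subgroup B := f.ker ⊓ A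
  have hI : Group.IsSolvable (K.map p) := by
    apply Group.isSolvable_of_comm
    rintro ⟨_, x, hx, rfl⟩ ⟨_, y, hy, rfl⟩
    exact Subtype.ext (hcomm x hx.1 y hy.2)
  have hRs' : Group.IsSolvable (R ⊓ K.subgroupOf A : Subgroup A) :=
    Group.isSolvable_of_isSolvable_injective
      (f := Subgroup.inclusion inf_le_left) (Subgroup.inclusion_injective _)
  have hK : Group.IsSolvable K := by
    let g : (R ⊓ K.subgroupOf A : Subgroup A) →* K :=
      (A.subtype.comp (R ⊓ K.subgroupOf A : Subgroup A).subtype).codRestrict K (fun x => x.2.2)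
    refine Group.isSolvable_of_ker_le_range g (p.subgroupMap K) ?_
    intro x hx
    have h1 : p x.1 = 1 := congrArg Subtype.val (MonoidHom.mem_ker.1 hx)
    obtain ⟨r, hr, hrx⟩ := (QuotientGroup.eq_one_iff _).1 h1
    refine ⟨⟨r, hr, ?_⟩, Subtype.ext hrx⟩
    change A.subtype r ∈ K
    rw [hrx]; exact x.2
  let H : Subgroup B := f.ker ⊓ Q.comap (QuotientGroup.mk' A)
  let q : H →* Q := ((QuotientGroup.mk' A).comp H.subtype).codRestrict Q (fun x => x.2.2)
  have hKH : K ≤ H := by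
    intro x hx
    refine ⟨hx.1, ?_⟩
    change QuotientGroup.mk' A x ∈ Q
    have : QuotientGroup.mk' A x = 1 := (QuotientGroup.eq_one_iff _).2 hx.2
    rw [this]; exact Q.one_mem
  refine Group.isSolvable_of_ker_le_range (Subgroup.inclusion hKH) q ?_
  intro x hx
  have h1 : QuotientGroup.mk' A x.1 = 1 := congrArg Subtype.val (MonoidHom.mem_ker.1 hx)
  exact ⟨⟨x.1, x.2.1, (QuotientGroup.eq_one_iff _).1 h1⟩, rfl⟩
end

section
/- Let X be a topological space and S a finite set of functions X → ℝ. For a finite set T of functions put M_T(x) = ∑_{f ∈ T} |f(x)|, and let S⁺ = {f ∈ S | f is not little-o of M_S along the cocompact filter of X} be the set of dominating functions of S. Then M_S and M_{S⁺} have the same order along the cocompact filter of X: each is big-O of the other along the cocompact filter of X. -/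
open Filter Asymptotics
open scoped Classical

/-- for a finite set `S` of real functions on a topological space
`X`, with `M_T x = ∑ f ∈ T, |f x|` and `S⁺ ⊆ S` the subset of functions that are
not little-o of `M_S` along the cocompact filter (the dominating functions),
`M_S` and `M_{S⁺}` have the same order along the cocompact filter of `X`. -/
theorem stmt_13 (X : Type*) [TopologicalSpace X] (S : Finset (X → ℝ)) :
    ((fun x : X => ∑ f ∈ S, |f x|) =O[cocompact X]
      fun x : X => ∑ f ∈ S.filter
        (fun f => ¬ (f =o[cocompact X] fun x : X => ∑ g ∈ S, |g x|)), |f x|) ∧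
    ((fun x : X => ∑ f ∈ S.filter
        (fun f => ¬ (f =o[cocompact X] fun x : X => ∑ g ∈ S, |g x|)), |f x|)
      =O[cocompact X] fun x : X => ∑ f ∈ S, |f x|) := by
  constructor
  · have h : (fun x : X => ∑ f ∈ S.filter
        (fun f => f =o[cocompact X] fun x : X => ∑ g ∈ S, |g x|), |f x|)
        =o[cocompact X] fun x : X => ∑ g ∈ S, |g x| := by
      apply IsLittleO.fun_sum
      intro f hf
      exact (Finset.mem_filter.mp hf).2.abs_left
    refine h.right_isBigO_sub.congr_right ?_
    intro x
    have := Finset.sum_filter_add_sum_filter_not S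
      (fun f => f =o[cocompact X] fun x : X => ∑ g ∈ S, |g x|) (fun f => |f x|)
    linarith
  · refine IsBigO.of_bound 1 (Eventually.of_forall fun x => ?_)
    rw [one_mul, Real.norm_of_nonneg (Finset.sum_nonneg fun f _ => abs_nonneg _),
      Real.norm_of_nonneg (Finset.sum_nonneg fun f _ => abs_nonneg _)]
    exact Finset.sum_le_sum_of_subset_of_nonneg (Finset.filter_subset _ _)
      fun f _ _ => abs_nonneg _
end

section
/- Let s ≥ 1 and let t ∈ ℝ satisfy 0 < t and s · t < 1. Then the function X ∈ ℝ^s ↦ ∑_i exp(X_i − t · ∑_j X_j) + exp(−t · ∑_j X_j) tends to +∞ along the cocompact filter of ℝ^s; that is, it is a proper function on ℝ^s going to +∞ as ‖X‖ → ∞. -/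
open Filter

/-- for `s ≥ 1` and `0 < t` with `s·t < 1`, the function
`X ↦ ∑ i, exp (X i − t ∑ j, X j) + exp (−t ∑ j, X j)` is proper on `ℝˢ`, going
to `+∞` along the cocompact filter. -/
theorem stmt_15 (s : ℕ) (hs : 1 ≤ s) (t : ℝ) (ht : 0 < t) (hst : (s : ℝ) * t < 1) :
    Tendsto
      (fun X : Fin s → ℝ =>
        (∑ i, Real.exp (X i - t * ∑ j, X j)) + Real.exp (-(t * ∑ j, X j)))
      (cocompact (Fin s → ℝ)) atTop := by
  have hd : 0 < 1 - (s : ℝ) * t := by linarith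
  have hs0 : (0 : ℝ) ≤ s := Nat.cast_nonneg s
  set K : ℝ := s / (1 - s * t) with hK
  have hK0 : 0 ≤ K := div_nonneg hs0 hd.le
  set A : ℝ := 1 + t * K with hA
  have hA0 : 0 < A := by positivity
  set C : ℝ := 1 / t + s * A + A with hC
  have hC0 : 0 < C := by positivity
  have key : ∀ X : Fin s → ℝ, ‖X‖ / C ≤
      (∑ i, Real.exp (X i - t * ∑ j, X j)) + Real.exp (-(t * ∑ j, X j)) := by
    intro X
    set S := ∑ j, X j with hS
    set M := (∑ i, Real.exp (X i - t * S)) + Real.exp (-(t * S)) with hM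
    have hsum0 : 0 ≤ ∑ i, Real.exp (X i - t * S) :=
      Finset.sum_nonneg fun i _ => (Real.exp_pos _).le
    have hM0 : 0 ≤ M := add_nonneg hsum0 (Real.exp_pos _).le
    have h1 : -(t * S) ≤ M := by
      have := Real.add_one_le_exp (-(t * S))
      linarith
    have h2 : ∀ i, X i ≤ M + t * S := by
      intro i
      have a := Real.add_one_le_exp (X i - t * S)
      have b := Finset.single_le_sum (f := fun i => Real.exp (X i - t * S))
        (fun i _ => (Real.exp_pos _).le) (Finset.mem_univ i)
      have c := Real.exp_pos (-(t * S))
      linarith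
    have h3 : S ≤ s * (M + t * S) := by
      have := Finset.sum_le_sum (s := Finset.univ) fun i _ => h2 i
      simpa [mul_add] using this
    have h4 : S ≤ K * M := by
      rw [hK, div_mul_eq_mul_div, le_div_iff₀ hd]
      linarith
    have h5 : ∀ i, X i ≤ A * M := by
      intro i
      have := mul_le_mul_of_nonneg_left h4 ht.le
      have := h2 i
      rw [hA]
      linarith
    have h6 : -S ≤ 1 / t * M := by
      rw [div_mul_eq_mul_div, le_div_iff₀ ht]
      linarith
    have h7 : ∀ i, A * M - X i ≤ s * (A * M) - S := by
      intro i
      have b := Finset.single_le_sum (f := fun i => A * M - X i)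
        (fun i _ => sub_nonneg.2 (h5 i)) (Finset.mem_univ i)
      simpa [Finset.sum_sub_distrib] using b
    rw [div_le_iff₀ hC0, pi_norm_le_iff_of_nonneg (by positivity)]
    intro i
    have e1 : 0 ≤ 1 / t * M := by positivity
    have e2 : 0 ≤ s * (A * M) := by positivity
    have e3 : 0 ≤ A * M := by positivity
    have e4 : M * C = 1 / t * M + s * (A * M) + A * M := by rw [hC]; ring
    rw [Real.norm_eq_abs, abs_le, e4]
    have := h5 i
    have := h7 i
    constructor <;> linarith
  exact tendsto_atTop_mono key ((tendsto_norm_cocompact_atTop).atTop_div_const hC0)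
end

section
/- Let k ≥ 1 and let J ∈ GL(k,ℝ) be the unipotent single Jordan block, i.e. the k×k matrix with 1 on the diagonal, 1 on the superdiagonal, and 0 elsewhere. Then there exists a sharp open convex cone C ⊆ ℝ^k with J · C = C if and only if k is odd. -/
open Filter Topology

noncomputable def ch (t : ℝ) : ℕ → ℝ
  | 0 => 1
  | (j + 1) => ch t j * (t - j) / (j + 1)

lemma ch_zero (t : ℝ) : ch t 0 = 1 := rfl
lemma ch_succ (t : ℝ) (j : ℕ) : ch t (j + 1) = ch t j * (t - j) / (j + 1) := rfl

lemma ch_pascal (t : ℝ) (j : ℕ) : ch (t + 1) (j + 1) = ch t j + ch t (j + 1) := by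
  induction j with
  | zero => simp [ch_succ, ch_zero]; ring
  | succ j ih =>
    rw [ch_succ (t + 1), ih, ch_succ t (j + 1), ch_succ t j]
    have h1 : (j : ℝ) + 1 ≠ 0 := by positivity
    have h2 : (j : ℝ) + 1 + 1 ≠ 0 := by positivity
    push_cast
    field_simp
    ring

lemma ch_zero_succ (j : ℕ) : ch 0 (j + 1) = 0 := by
  induction j with
  | zero => simp [ch_succ, ch_zero]
  | succ j ih => rw [ch_succ, ih]; simp

lemma ch_nat (n j : ℕ) : ch n j = n.choose j := by
  induction n generalizing j with
  | zero =>
    cases j with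
    | zero => simp [ch_zero]
    | succ j => simpa using ch_zero_succ j
  | succ n ih =>
    cases j with
    | zero => simp [ch_zero]
    | succ j =>
      push_cast
      rw [ch_pascal, ih, ih, Nat.choose_succ_succ]
      push_cast; rfl

lemma ch_neg_sign (t : ℝ) (ht : t < 0) (j : ℕ) : 0 < (-1) ^ j * ch t j := by
  induction j with
  | zero => simp [ch_zero]
  | succ j ih =>
    have : (-1) ^ (j + 1) * ch t (j + 1) = ((-1) ^ j * ch t j) * ((j - t) / (j + 1)) := by
      rw [ch_succ, pow_succ]; ring
    rw [this]
    have : 0 < (j : ℝ) - t := by have : (0 : ℝ) ≤ j := by positivity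
                                 linarith
    positivity

lemma ch_even_nonneg (n : ℤ) (m : ℕ) : 0 ≤ ch n (2 * m) := by
  rcases lt_or_ge n 0 with h | h
  · have := ch_neg_sign n (by exact_mod_cast h) (2 * m)
    rw [pow_mul] at this
    simp at this
    exact this.le
  · lift n to ℕ using h
    have := ch_nat n (2 * m)
    simp only [Int.cast_natCast]
    rw [this]; positivity

lemma ch_abs_mono (t : ℝ) (d : ℕ) (h : t ≤ -1 ∨ 2 * (d : ℝ) ≤ t) (j : ℕ) (hj : j ≤ d) :
    |ch t j| ≤ |ch t d| := by
  induction d, hj using Nat.le_induction with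
  | base => exact le_rfl
  | succ d hd ih =>
    refine (ih (h.imp id (fun h => ?_))).trans ?_
    · push_cast at h; linarith
    · rw [ch_succ, abs_div, abs_mul, abs_of_pos (by positivity : (0 : ℝ) < d + 1),
        le_div_iff₀ (by positivity)]
      gcongr
      have hd0 : (0 : ℝ) ≤ d := by positivity
      rcases h with h | h
      · rw [abs_of_neg (by linarith)]; linarith
      · push_cast at h
        rw [abs_of_pos (by linarith)]; linarith

lemma ch_bound (m j : ℕ) (hj : j ≤ 2 * m) (n : ℤ) :
    |ch n j| ≤ 2 ^ (4 * m) * (1 + ch n (2 * m)) := by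
  have h0 := ch_even_nonneg n m
  have h1 : (1 : ℝ) ≤ 2 ^ (4 * m) := one_le_pow₀ (by norm_num)
  by_cases h : n ≤ -1 ∨ 4 * (m : ℤ) ≤ n
  · have := ch_abs_mono n (2 * m) (h.imp (fun h => by exact_mod_cast h) (fun h => by
      have : ((4 * m : ℤ) : ℝ) ≤ n := by exact_mod_cast h
      push_cast at this ⊢; linarith)) j hj
    rw [abs_of_nonneg h0] at this
    nlinarith
  · push Not at h
    obtain ⟨ha, hb⟩ := h
    lift n to ℕ using (by omega)
    have e := ch_nat n j
    simp only [Int.cast_natCast] at *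
    rw [e, abs_of_nonneg (by positivity)]
    have : (n.choose j : ℝ) ≤ 2 ^ (4 * m) := by
      have := (Nat.choose_le_two_pow n j).trans (Nat.pow_le_pow_right (by norm_num) (by omega : n ≤ 4 * m))
      exact_mod_cast this
    nlinarith

lemma ch_ratio {l : Filter ℤ} (hl : Tendsto (fun n : ℤ => |(n : ℝ)|) l atTop) (j d : ℕ) (hj : j < d) :
    Tendsto (fun n : ℤ => ch n j / ch n d) l (𝓝 0) := by
  have step : ∀ j : ℕ, Tendsto (fun n : ℤ => ch n j / ch n (j + 1)) l (𝓝 0) := by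
    intro j
    have h1 : Tendsto (fun n : ℤ => |(n : ℝ) - j|) l atTop := by
      refine tendsto_atTop_mono (fun n => ?_) (tendsto_atTop_add_const_right l (-(j : ℝ)) hl)
      have := abs_sub_abs_le_abs_sub (n : ℝ) j
      rw [abs_of_nonneg (by positivity : (0 : ℝ) ≤ j)] at this
      linarith
    have h2 : Tendsto (fun n : ℤ => ((j : ℝ) + 1) / |(n : ℝ) - j|) l (𝓝 0) := h1.const_div_atTop _
    refine squeeze_zero_norm (fun n => ?_) h2
    rw [ch_succ, Real.norm_eq_abs]
    by_cases hc : ch n j = 0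
    · simp [hc]; positivity
    · rw [show ch n j / (ch n j * (n - j) / (j + 1)) = ((j : ℝ) + 1) / (n - j) by
        rw [div_div_eq_mul_div, mul_div_mul_left _ _ hc], abs_div,
        abs_of_pos (by positivity : (0 : ℝ) < j + 1)]
  induction d, hj using Nat.le_induction with
  | base => exact step j
  | succ d hd ih =>
    have := ih.mul (step d)
    simp only [mul_zero] at this
    refine this.congr' ?_
    filter_upwards [hl.eventually_gt_atTop ((d : ℝ) + 1)] with n hn
    have : ch n d ≠ 0 := by
      rcases lt_or_ge n 0 with h | h
      · intro h0
        have := ch_neg_sign n (by exact_mod_cast h) d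
        simp [h0] at this
      · lift n to ℕ using h
        have e := ch_nat n d
        simp only [Int.cast_natCast] at *
        rw [e]
        rw [abs_of_nonneg (by positivity)] at hn
        have hn' : d + 1 < n := by exact_mod_cast hn
        have := Nat.choose_pos (show d ≤ n by omega)
        positivity
    rw [div_mul_div_cancel₀ this]

noncomputable def ext {k : ℕ} (x : Fin k → ℝ) (i : ℕ) : ℝ := if h : i < k then x ⟨i, h⟩ else 0

noncomputable def S {k : ℕ} (t : ℝ) (i : ℕ) (x : Fin k → ℝ) : ℝ :=
  ∑ j ∈ Finset.range k, ch t j * ext x (i + j)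

def JM (k : ℕ) : Matrix (Fin k) (Fin k) ℝ := Matrix.of fun i j : Fin k =>
          if i = j then (1 : ℝ) else if (j : ℕ) = (i : ℕ) + 1 then 1 else 0

lemma ext_ge {k : ℕ} (x : Fin k → ℝ) (i : ℕ) (h : k ≤ i) : ext x i = 0 := by
  simp [ext, h]

lemma ext_fin {k : ℕ} (x : Fin k → ℝ) (i : Fin k) : ext x i = x i := by
  simp [ext]

lemma ext_add {k : ℕ} (x y : Fin k → ℝ) (i : ℕ) : ext (x + y) i = ext x i + ext y i := by
  unfold ext; split_ifs <;> simp

lemma ext_smul {k : ℕ} (c : ℝ) (y : Fin k → ℝ) (i : ℕ) : ext (c • y) i = c * ext y i := by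
  unfold ext; split_ifs <;> simp

lemma JM_apply {k : ℕ} (x : Fin k → ℝ) (i : Fin k) :
    (JM k).mulVec x i = ext x i + ext x (i + 1) := by
  have : ∀ j : Fin k, JM k i j * x j = (if j = i then x j else 0) +
      (if (j : ℕ) = (i : ℕ) + 1 then x j else 0) := by
    intro j
    simp only [JM, Matrix.of_apply]
    by_cases h : i = j
    · subst h; simp
    · simp [h, Ne.symm h]
  simp only [Matrix.mulVec, dotProduct, this, Finset.sum_add_distrib]
  congr 1
  · simp [ext_fin]
  · by_cases h : (i : ℕ) + 1 < k
    · simp only [ext, h, dif_pos]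
      rw [Finset.sum_eq_single (⟨i + 1, h⟩ : Fin k)]
      · simp
      · intro b _ hb
        rw [if_neg]
        intro hh; exact hb (Fin.ext hh)
      · simp
    · rw [ext_ge _ _ (by omega)]
      apply Finset.sum_eq_zero
      intro j _
      rw [if_neg]
      have := j.2
      omega

lemma ext_JM {k : ℕ} (x : Fin k → ℝ) (i : ℕ) :
    ext ((JM k).mulVec x) i = ext x i + ext x (i + 1) := by
  by_cases h : i < k
  · have := JM_apply x ⟨i, h⟩
    rw [← this]; simp [ext, h]
  · rw [ext_ge _ _ (by omega), ext_ge _ _ (by omega), ext_ge _ _ (by omega)]; simp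

lemma S_JM {k : ℕ} (t : ℝ) (i : ℕ) (x : Fin k → ℝ) :
    S t i ((JM k).mulVec x) = S t i x + S t (i + 1) x := by
  simp only [S, ext_JM, mul_add, Finset.sum_add_distrib]
  congr 1
  refine Finset.sum_congr rfl fun j _ => ?_
  rw [show i + j + 1 = i + 1 + j by ring]

lemma S_succ {k : ℕ} (t : ℝ) (i : ℕ) (x : Fin k → ℝ) :
    S (t + 1) i x = S t i x + S t (i + 1) x := by
  have key : ∀ t, S t i x = ext x i + ∑ j ∈ Finset.range k, ch t (j + 1) * ext x (i + (j + 1)) := by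
    intro t
    have h1 := Finset.sum_range_succ (fun j => ch t j * ext x (i + j)) k
    have h2 := Finset.sum_range_succ' (fun j => ch t j * ext x (i + j)) k
    rw [ext_ge x (i + k) (by omega)] at h1
    rw [h1] at h2
    simp only [ch_zero, mul_zero, add_zero, one_mul] at h2
    unfold S
    linarith
  rw [key (t + 1), key t, add_assoc]
  congr 1
  unfold S
  rw [← Finset.sum_add_distrib]
  refine Finset.sum_congr rfl fun j _ => ?_
  rw [ch_pascal, show i + 1 + j = i + (j + 1) by ring]; ring

lemma S_add {k : ℕ} (t : ℝ) (i : ℕ) (x y : Fin k → ℝ) : S t i (x + y) = S t i x + S t i y := by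
  simp only [S, ext_add, mul_add, Finset.sum_add_distrib]

lemma S_smul {k : ℕ} (t : ℝ) (i : ℕ) (c : ℝ) (y : Fin k → ℝ) : S t i (c • y) = c * S t i y := by
  simp only [S, ext_smul, Finset.mul_sum]
  refine Finset.sum_congr rfl fun j _ => by ring

lemma S_zero {k : ℕ} (i : ℕ) (x : Fin k → ℝ) : S 0 i x = ext x i := by
  unfold S
  cases k with
  | zero => simp [ext]
  | succ k =>
    rw [Finset.sum_range_succ']
    simp [ch_zero_succ, ch_zero]

lemma JM_inj (k : ℕ) : Function.Injective (JM k).mulVec := by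
  intro x y hxy
  have h : ∀ r i : ℕ, k ≤ i + r → ext x i = ext y i := by
    intro r
    induction r with
    | zero => intro i hi; rw [ext_ge _ _ (by omega), ext_ge _ _ (by omega)]
    | succ r ih =>
      intro i hi
      have h1 := ext_JM x i
      have h2 := ext_JM y i
      rw [hxy] at h1
      have := ih (i + 1) (by omega)
      linarith
  ext i
  rw [← ext_fin x i, ← ext_fin y i]
  exact h k i (by omega)

lemma orbit_mem {k : ℕ} {C : Set (Fin k → ℝ)} (hC : (JM k).mulVec '' C = C) {x : Fin k → ℝ}
    (hx : x ∈ C) (n : ℤ) : (fun i : Fin k => S n i x) ∈ C := by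
  have step : ∀ n : ℤ, (JM k).mulVec (fun i : Fin k => S n i x) = (fun i : Fin k => S (n + 1 : ℤ) i x) := by
    intro n
    ext i
    have e : ∀ i : ℕ, ext (fun i : Fin k => S (n : ℝ) i x) i = S (n : ℝ) i x := by
      intro i
      by_cases h : i < k
      · simp [ext, h]
      · rw [ext_ge _ _ (by omega)]
        unfold S
        symm
        apply Finset.sum_eq_zero
        intro j _
        rw [ext_ge _ _ (by omega), mul_zero]
    rw [JM_apply, e, e]
    push_cast
    rw [S_succ]
  have iffs : ∀ y, (JM k).mulVec y ∈ C ↔ y ∈ C := by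
    intro y
    conv_lhs => rw [← hC]
    exact (JM_inj k).mem_set_image
  induction n using Int.induction_on with
  | zero => simpa [S_zero, ext_fin] using hx
  | succ n ih => rw [← step, iffs]; exact ih
  | pred n ih =>
    rw [← iffs, step]
    simpa using ih

lemma limit_dir {d : ℕ} {x : Fin (d + 1) → ℝ} {l : Filter ℤ}
    (hl : Tendsto (fun n : ℤ => |(n : ℝ)|) l atTop) (hne : ∀ᶠ n : ℤ in l, ch n d ≠ 0) :
    Tendsto (fun n : ℤ => (ch n d)⁻¹ • (fun i : Fin (d + 1) => S n i x)) l
      (𝓝 (x (Fin.last d) • Pi.single 0 1)) := by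
  rw [tendsto_pi_nhds]
  intro i
  have h : ∀ j ∈ Finset.range (d + 1), Tendsto (fun n : ℤ => ch n j / ch n d * ext x (i + j)) l
      (𝓝 (if j = d then ext x (i + j) else 0)) := by
    intro j hj
    by_cases hjd : j = d
    · subst hjd
      simp only [if_true]
      refine tendsto_const_nhds.congr' ?_
      filter_upwards [hne] with n hn
      rw [div_self hn, one_mul]
    · simp only [hjd, if_false]
      have := (ch_ratio hl j d (by simp at hj; omega)).mul_const (ext x (i + j))
      simpa using this
  have := tendsto_finsetSum _ h
  refine (this.congr ?_).trans (le_of_eq ?_)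
  · intro n
    simp only [Pi.smul_apply, smul_eq_mul, S, Finset.mul_sum]
    refine Finset.sum_congr rfl fun j _ => by ring
  · congr 1
    rw [Finset.sum_ite_eq' ]
    simp only [Finset.mem_range, Nat.lt_succ_self, if_true]
    by_cases hi : i = 0
    · subst hi
      simp [ext, Fin.last]
    · rw [ext_ge]
      · simp [hi]
      · have : (i : ℕ) ≠ 0 := fun h => hi (Fin.ext h)
        omega

lemma even_dir {d : ℕ} (hd : Odd d) {C : Set (Fin (d + 1) → ℝ)} (hne : C.Nonempty) (ho : IsOpen C)
    (hconv : Convex ℝ C) (hcone : ∀ t : ℝ, 0 < t → ∀ x ∈ C, t • x ∈ C)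
    (hC : (JM (d + 1)).mulVec '' C = C) :
    ∃ x v : Fin (d + 1) → ℝ, v ≠ 0 ∧ ∀ t : ℝ, x + t • v ∈ closure C := by
  obtain ⟨x, hx, hx0⟩ : ∃ x ∈ C, x (Fin.last d) ≠ 0 := by
    obtain ⟨x, hx⟩ := hne
    by_cases h0 : x (Fin.last d) = 0
    · have ht : Tendsto (fun δ : ℝ => x + δ • (Pi.single (Fin.last d) 1 : Fin (d + 1) → ℝ)) (𝓝[≠] 0) (𝓝 x) := by
        have : Continuous (fun δ : ℝ => x + δ • (Pi.single (Fin.last d) 1 : Fin (d + 1) → ℝ)) := by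
          fun_prop
        have := this.tendsto 0
        simp only [zero_smul, add_zero] at this
        exact this.mono_left nhdsWithin_le_nhds
      obtain ⟨δ, h1, h2⟩ := ((ht.eventually (ho.mem_nhds hx)).and self_mem_nhdsWithin).exists
      refine ⟨_, h1, ?_⟩
      simpa [h0] using h2
    · exact ⟨x, hx, h0⟩
  set w : Fin (d + 1) → ℝ := x (Fin.last d) • Pi.single 0 1 with hw
  have hwne : w ≠ 0 := by
    intro h
    have := congrFun h 0
    simp [hw, hx0] at this
  have h1 : w ∈ closure C := by
    have hpos : ∀ᶠ n : ℤ in atTop, 0 < ch n d := by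
      filter_upwards [eventually_ge_atTop (d : ℤ)] with n hn
      lift n to ℕ using (by omega)
      have e := ch_nat n d
      simp only [Int.cast_natCast] at *
      rw [e]
      have := Nat.choose_pos (show d ≤ n by omega)
      positivity
    refine mem_closure_of_tendsto (limit_dir (tendsto_abs_atTop_atTop.comp tendsto_intCast_atTop_atTop)
      (hpos.mono fun n h => h.ne')) ?_
    filter_upwards [hpos] with n hn
    exact hcone _ (inv_pos.2 hn) _ (orbit_mem hC hx n)
  have h2 : -w ∈ closure C := by
    have hneg : ∀ᶠ n : ℤ in atBot, ch n d < 0 := by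
      filter_upwards [eventually_lt_atBot (0 : ℤ)] with n hn
      have := ch_neg_sign n (by exact_mod_cast hn) d
      rw [hd.neg_one_pow] at this
      linarith
    refine mem_closure_of_tendsto (limit_dir (tendsto_abs_atBot_atTop.comp
      (tendsto_intCast_atBot_iff.2 tendsto_id)) (hneg.mono fun n h => h.ne)).neg ?_
    filter_upwards [hneg] with n hn
    rw [← neg_smul]
    exact hcone _ (neg_pos.2 (inv_lt_zero.2 hn)) _ (orbit_mem hC hx n)
  have hsc : ∀ t : ℝ, 0 < t → ∀ y ∈ closure C, t • y ∈ closure C := by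
    intro t ht y hy
    exact map_mem_closure (continuous_const_smul t) hy (fun z hz => hcone t ht z hz)
  refine ⟨0, w, hwne, fun t => ?_⟩
  rw [zero_add]
  rcases lt_trichotomy t 0 with h | h | h
  · have := hsc (-t) (by linarith) _ h2
    simpa using this
  · have := hconv.closure h1 h2 (by norm_num : (0 : ℝ) ≤ 1 / 2) (by norm_num : (0 : ℝ) ≤ 1 / 2) (by norm_num)
    simpa [h] using this
  · exact hsc t h _ h1

def K (k : ℕ) : Set (Fin k → ℝ) := {x | ∀ n : ℤ, 0 ≤ S n 0 x}

lemma K_closed (k : ℕ) : IsClosed (K k) := by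
  have : K k = ⋂ n : ℤ, {x | 0 ≤ S n 0 x} := by ext; simp [K]
  rw [this]
  refine isClosed_iInter fun n => isClosed_le continuous_const ?_
  unfold S
  refine continuous_finsetSum _ fun j _ => continuous_const.mul ?_
  unfold ext
  split_ifs <;> fun_prop

lemma K_convex (k : ℕ) : Convex ℝ (K k) := by
  intro x hx y hy a b ha hb _ n
  rw [S_add, S_smul, S_smul]
  have := hx n
  have := hy n
  positivity

lemma K_JM (k : ℕ) : (JM k).mulVec ⁻¹' K k = K k := by
  ext x
  have h : ∀ n : ℤ, S n 0 ((JM k).mulVec x) = S (n + 1 : ℤ) 0 x := by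
    intro n; push_cast; rw [S_JM, S_succ]
  constructor
  · intro hx n
    have := hx (n - 1)
    rw [h] at this
    simpa using this
  · intro hx n
    rw [h]; exact hx _

lemma S_inj {k : ℕ} (v : Fin k → ℝ) (h : ∀ n : ℤ, S n 0 v = 0) : v = 0 := by
  have key : ∀ i : ℕ, ext v i = 0 := by
    intro i
    induction i using Nat.strong_induction_on with
    | _ i ih =>
      by_cases hi : i < k
      · have := h i
        unfold S at this
        rw [Finset.sum_eq_single i] at this
        · have e := ch_nat i i
          simp only [Int.cast_natCast] at *
          simpa [e] using this
        · intro j _ hj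
          rcases lt_or_gt_of_ne hj with hj | hj
          · simp [ih j hj]
          · have e := ch_nat i j
            rw [Nat.choose_eq_zero_of_lt hj] at e
            simp only [Int.cast_natCast] at *
            simp [e]
        · simp [hi]
      · exact ext_ge _ _ (by omega)
  ext i
  rw [← ext_fin v i, key]; rfl

lemma K_int (m : ℕ) : (interior (K (2 * m + 1))).Nonempty := by
  let k := 2 * m + 1
  let x : Fin k → ℝ := Pi.single 0 1 + Pi.single (Fin.last (2 * m)) 1
  have hxS : ∀ n : ℤ, S n 0 x = 1 + ch n (2 * m) := by
    intro n
    have e0 : ∀ j, ext (Pi.single 0 1 : Fin k → ℝ) j = if j = 0 then 1 else 0 := by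
      intro j
      unfold ext
      simp only [Pi.single_apply, Fin.ext_iff]
      split_ifs <;> simp_all [k]
    have e1 : ∀ j, ext (Pi.single (Fin.last (2 * m)) 1 : Fin k → ℝ) j = if j = 2 * m then 1 else 0 := by
      intro j
      unfold ext
      simp only [Pi.single_apply, Fin.ext_iff, Fin.val_last]
      split_ifs <;> first | rfl | (exfalso; omega)
    simp only [x, S_add]
    simp only [S, zero_add, e0, e1, mul_ite, mul_one, mul_zero, Finset.sum_ite_eq']
    simp [k, ch_zero]
  let B : ℝ := 2 ^ (4 * m)
  have hB : 0 < B := by positivity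
  have hk : (0 : ℝ) < k := by simp only [k]; positivity
  refine ⟨x, mem_interior_iff_mem_nhds.2 (Metric.mem_nhds_iff.2 ⟨1 / (k * B), by positivity, ?_⟩)⟩
  intro y hy n
  have hy' : ‖y - x‖ < 1 / (k * B) := by simpa [dist_eq_norm] using hy
  have hsum : S n 0 y = S n 0 x + S n 0 (y - x) := by rw [← S_add]; simp
  have h0 := ch_even_nonneg n m
  have hb : |S n 0 (y - x)| ≤ ∑ j ∈ Finset.range k, (B * (1 + ch n (2 * m))) * (1 / (k * B)) := by
    unfold S
    refine (Finset.abs_sum_le_sum_abs _ _).trans (Finset.sum_le_sum fun j hj => ?_)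
    rw [abs_mul]
    have hjk : j < k := Finset.mem_range.1 hj
    refine mul_le_mul (ch_bound m j (by omega) n) ?_ (abs_nonneg _) (by positivity)
    rw [zero_add]
    unfold ext
    rw [dif_pos hjk]
    exact (norm_le_pi_norm (y - x) ⟨j, hjk⟩).trans hy'.le
  rw [Finset.sum_const, Finset.card_range, nsmul_eq_mul,
    show (k : ℝ) * (B * (1 + ch n (2 * m)) * (1 / (k * B))) = 1 + ch n (2 * m) by field_simp] at hb
  rw [hsum, hxS]
  have := neg_abs_le (S n 0 (y - x))
  linarith

lemma JM_image_int (k : ℕ) : (JM k).mulVec '' interior (K k) = interior (K k) := by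
  let L : (Fin k → ℝ) ≃ₗ[ℝ] (Fin k → ℝ) :=
    LinearEquiv.ofInjectiveEndo (Matrix.mulVecLin (JM k)) (JM_inj k)
  let H := L.toContinuousLinearEquiv.toHomeomorph
  have hH : (H : (Fin k → ℝ) → (Fin k → ℝ)) = (JM k).mulVec := by
    ext x; rfl
  rw [← hH, H.image_interior]
  congr 1
  conv_lhs => rw [← K_JM k, ← hH]
  exact Set.image_preimage_eq _ H.surjective

/-- the unipotent single Jordan block of size `k` preserves a
sharp open convex cone of `ℝᵏ` iff `k` is odd. -/
theorem stmt_16 (k : ℕ) (hk : 1 ≤ k) :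
    (∃ C : Set (Fin k → ℝ), C.Nonempty ∧ IsOpen C ∧ Convex ℝ C ∧
      (∀ t : ℝ, 0 < t → ∀ x ∈ C, t • x ∈ C) ∧
      (¬ ∃ x v : Fin k → ℝ, v ≠ 0 ∧ ∀ t : ℝ, x + t • v ∈ closure C) ∧
      (fun x => Matrix.mulVec
        (Matrix.of fun i j : Fin k =>
          if i = j then (1 : ℝ) else if (j : ℕ) = (i : ℕ) + 1 then 1 else 0) x) '' C = C) ↔
    Odd k := by
  constructor
  · rintro ⟨C, hne, ho, hconv, hcone, hsharp, hC⟩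
    by_contra hodd
    obtain ⟨d, rfl⟩ : ∃ d, k = d + 1 := ⟨k - 1, by omega⟩
    have hd : Odd d := by
      rw [Nat.not_odd_iff_even, Nat.even_add_one, Nat.not_even_iff_odd] at hodd
      exact hodd
    exact hsharp (even_dir hd hne ho hconv hcone hC)
  · rintro ⟨m, rfl⟩
    refine ⟨interior (K (2 * m + 1)), K_int m, isOpen_interior, (K_convex _).interior, ?_, ?_,
      JM_image_int _⟩
    · intro t ht x hx
      rw [mem_interior] at hx ⊢
      obtain ⟨U, hU, hUo, hxU⟩ := hx
      refine ⟨(fun y => t • y) '' U, ?_, (isOpenMap_smul₀ ht.ne') U hUo, ⟨x, hxU, rfl⟩⟩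
      rintro _ ⟨y, hy, rfl⟩ n
      show 0 ≤ S n 0 (t • y)
      rw [S_smul]
      have := hU hy n
      positivity
    · rintro ⟨x, v, hv, h⟩
      apply hv
      apply S_inj
      intro n
      have h' : ∀ t : ℝ, 0 ≤ S n 0 x + t * S n 0 v := by
        intro t
        have := closure_minimal interior_subset (K_closed _) (h t) n
        rwa [S_add, S_smul] at this
      by_contra hne
      have := h' (-(S n 0 x + 1) / S n 0 v)
      rw [div_mul_cancel₀ _ hne] at this
      linarith
end

section
/- Let λ = (1+√2)² and let R be the set of real 2×2 matrices of the form [[λ^n, a + b·√2],[0, 1]] with n, a, b ∈ ℤ. Then R is a subgroup of GL(2,ℝ); R is solvable; and R is not virtually nilpotent, i.e. no finite-index subgroup of R is nilpotent. -/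
namespace Stmt17

open scoped commutatorElement

/-- The affine matrix `[[y, x], [0, 1]]` as an element of `GL(2,ℝ)`. -/
noncomputable def aff (y : ℝˣ) (x : ℝ) : Matrix.GeneralLinearGroup (Fin 2) ℝ where
  val := !![(y : ℝ), x; 0, 1]
  inv := !![((y⁻¹ : ℝˣ) : ℝ), -((y⁻¹ : ℝˣ) : ℝ) * x; 0, 1]
  val_inv := by
    ext i j; fin_cases i <;> fin_cases j <;> simp
  inv_val := by
    ext i j; fin_cases i <;> fin_cases j <;> simp

theorem aff_val (y : ℝˣ) (x : ℝ) :
    ((aff y x : Matrix.GeneralLinearGroup (Fin 2) ℝ) : Matrix (Fin 2) (Fin 2) ℝ) =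
      !![(y : ℝ), x; 0, 1] := rfl

theorem aff_mul (y y' : ℝˣ) (x x' : ℝ) : aff y x * aff y' x' = aff (y * y') (x + y * x') := by
  apply Units.ext
  rw [Units.val_mul, aff_val, aff_val, aff_val]
  ext i j; fin_cases i <;> fin_cases j <;> simp [add_comm]

theorem aff_one : aff 1 0 = 1 := by
  apply Units.ext
  rw [aff_val]
  ext i j; fin_cases i <;> fin_cases j <;> simp

theorem aff_inv (y : ℝˣ) (x : ℝ) : (aff y x)⁻¹ = aff y⁻¹ (-((y⁻¹ : ℝˣ) : ℝ) * x) := by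
  apply inv_eq_of_mul_eq_one_right
  rw [aff_mul, ← aff_one]
  simp

theorem aff_inj {y y' : ℝˣ} {x x' : ℝ} (h : aff y x = aff y' x') : y = y' ∧ x = x' := by
  have h1 := congrArg (fun g : Matrix.GeneralLinearGroup (Fin 2) ℝ =>
    (g : Matrix (Fin 2) (Fin 2) ℝ)) h
  simp only [aff_val] at h1
  refine ⟨Units.ext ?_, ?_⟩
  · simpa using congrFun (congrFun h1 0) 0
  · simpa using congrFun (congrFun h1 0) 1

theorem aff_pow_u (x : ℝ) (n : ℕ) : (aff 1 x) ^ n = aff 1 (n * x) := by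
  induction n with
  | zero => simp [aff_one]
  | succ k ih => rw [pow_succ, ih, aff_mul]; congr 1 <;> simp; ring

theorem aff_pow_d (y : ℝˣ) (n : ℕ) : (aff y 0) ^ n = aff (y ^ n) 0 := by
  induction n with
  | zero => simp [aff_one]
  | succ k ih => rw [pow_succ, ih, aff_mul, ← pow_succ]; simp

theorem aff_comm (y : ℝˣ) (x : ℝ) : ⁅aff 1 x, aff y 0⁆ = aff 1 (x * (1 - y)) := by
  rw [commutatorElement_def, mul_inv_eq_iff_eq_mul, mul_inv_eq_iff_eq_mul]
  simp only [aff_mul]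
  congr 1 <;> simp
  ring

/-- The unit `(1+√2)²`. -/
noncomputable def lam : ℝˣ := Units.mk0 ((1 + Real.sqrt 2) ^ 2) (by positivity)

/-- The additive group `ℤ[√2]`. -/
def A : Set ℝ := {x | ∃ a b : ℤ, x = (a : ℝ) + (b : ℝ) * Real.sqrt 2}

theorem A_add {x y : ℝ} (hx : x ∈ A) (hy : y ∈ A) : x + y ∈ A := by
  obtain ⟨a, b, rfl⟩ := hx
  obtain ⟨c, d, rfl⟩ := hy
  exact ⟨a + c, b + d, by push_cast; ring⟩

theorem A_neg {x : ℝ} (hx : x ∈ A) : -x ∈ A := by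
  obtain ⟨a, b, rfl⟩ := hx
  exact ⟨-a, -b, by push_cast; ring⟩

theorem A_mul {x y : ℝ} (hx : x ∈ A) (hy : y ∈ A) : x * y ∈ A := by
  obtain ⟨a, b, rfl⟩ := hx
  obtain ⟨c, d, rfl⟩ := hy
  have h : Real.sqrt 2 * Real.sqrt 2 = 2 := Real.mul_self_sqrt (by norm_num)
  exact ⟨a * c + 2 * b * d, a * d + b * c, by push_cast; linear_combination (b * d : ℝ) * h⟩

theorem lam_A : (lam : ℝ) ∈ A := by
  have h : Real.sqrt 2 * Real.sqrt 2 = 2 := Real.mul_self_sqrt (by norm_num)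
  exact ⟨3, 2, by simp only [lam, Units.val_mk0]; push_cast; linear_combination h⟩

theorem lam_inv_A : ((lam⁻¹ : ℝˣ) : ℝ) ∈ A := by
  have h : Real.sqrt 2 * Real.sqrt 2 = 2 := Real.mul_self_sqrt (by norm_num)
  refine ⟨3, -2, ?_⟩
  rw [Units.val_inv_eq_inv_val]
  apply inv_eq_of_mul_eq_one_right
  simp only [lam, Units.val_mk0]; push_cast
  linear_combination (-1 - 2 * Real.sqrt 2) * h

theorem lam_zpow_A (n : ℤ) : ((lam ^ n : ℝˣ) : ℝ) ∈ A := by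
  induction n using Int.induction_on with
  | zero => exact ⟨1, 0, by simp⟩
  | succ k ih => rw [zpow_add_one, Units.val_mul]; exact A_mul ih lam_A
  | pred k ih => rw [zpow_sub_one, Units.val_mul]; exact A_mul ih lam_inv_A

theorem one_lt_lam : 1 < (lam : ℝ) := by
  have : 0 < Real.sqrt 2 := by positivity
  simp only [lam, Units.val_mk0]
  nlinarith

/-- The group `R`. -/
noncomputable def R : Subgroup (Matrix.GeneralLinearGroup (Fin 2) ℝ) where
  carrier := {g | ∃ n : ℤ, ∃ x ∈ A, g = aff (lam ^ n) x}
  mul_mem' := by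
    rintro _ _ ⟨n, x, hx, rfl⟩ ⟨m, y, hy, rfl⟩
    exact ⟨n + m, _, A_add hx (A_mul (lam_zpow_A n) hy), by rw [aff_mul, zpow_add]⟩
  one_mem' := ⟨0, 0, ⟨0, 0, by simp⟩, by rw [zpow_zero, aff_one]⟩
  inv_mem' := by
    rintro _ ⟨n, x, hx, rfl⟩
    refine ⟨-n, _, A_mul (A_neg (lam_zpow_A (-n))) hx, ?_⟩
    rw [aff_inv, zpow_neg]

theorem mem_R {g : Matrix.GeneralLinearGroup (Fin 2) ℝ} :
    g ∈ R ↔ ∃ n : ℤ, ∃ x ∈ A, g = aff (lam ^ n) x := Iff.rfl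

theorem det_aff (y : ℝˣ) (x : ℝ) : Matrix.GeneralLinearGroup.det (aff y x) = y := by
  apply Units.ext
  simp [aff_val, Matrix.det_fin_two]

theorem solvable_R : Group.IsSolvable R := by
  let g : R →* ℝˣ := Matrix.GeneralLinearGroup.det.comp R.subtype
  have hk : ∀ k : g.ker, ∃ x, ((k : R) : Matrix.GeneralLinearGroup (Fin 2) ℝ) = aff 1 x := by
    rintro ⟨⟨_, n, x, hx, rfl⟩, hk⟩
    refine ⟨x, ?_⟩
    have : Matrix.GeneralLinearGroup.det (aff (lam ^ n) x) = 1 := hk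
    rw [det_aff] at this
    simp only [this]
  have : Group.IsSolvable g.ker := by
    apply Group.isSolvable_of_comm
    intro a b
    obtain ⟨x, hx⟩ := hk a
    obtain ⟨y, hy⟩ := hk b
    apply Subtype.ext
    apply Subtype.ext
    simp only [Subgroup.coe_mul, hx, hy, aff_mul]
    congr 1
    simp [add_comm]
  exact Group.isSolvable_of_ker_le_range g.ker.subtype g (by simp)

theorem not_vnil (H : Subgroup R) (hH : H.FiniteIndex) (hn : Group.IsNilpotent H) : False := by
  let t : R := ⟨aff lam 0, 1, 0, ⟨0, 0, by simp⟩, by simp⟩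
  let u : R := ⟨aff 1 1, 0, 1, ⟨1, 0, by simp⟩, by simp⟩
  obtain ⟨k, hk0, -, hk⟩ := Subgroup.exists_pow_mem_of_index_ne_zero hH.index_ne_zero t
  obtain ⟨m, hm0, -, hm⟩ := Subgroup.exists_pow_mem_of_index_ne_zero hH.index_ne_zero u
  have hlam : (1 : ℝ) - ((lam ^ k : ℝˣ) : ℝ) ≠ 0 := by
    have := one_lt_pow₀ one_lt_lam hk0.ne'
    rw [Units.val_pow_eq_pow_val]
    linarith
  have key : ∀ n : ℕ, ∃ h : H, h ∈ (⊤ : Subgroup H).lowerCentralSeries n ∧ ∃ x : ℝ, x ≠ 0 ∧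
      ((h : R) : Matrix.GeneralLinearGroup (Fin 2) ℝ) = aff 1 x := by
    intro n
    induction n with
    | zero =>
      refine ⟨⟨u ^ m, hm⟩, by simp, m, by exact_mod_cast hm0.ne', ?_⟩
      simp [u, aff_pow_u]
    | succ n ih =>
      obtain ⟨h, hh, x, hx, hhx⟩ := ih
      refine ⟨⁅h, ⟨t ^ k, hk⟩⁆, Subgroup.commutator_mem_commutator hh (Subgroup.mem_top _),
        x * (1 - ((lam ^ k : ℝˣ) : ℝ)), mul_ne_zero hx hlam, ?_⟩
      rw [← aff_comm, ← hhx, ← aff_pow_d]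
      rfl
  obtain ⟨n, hn⟩ := Subgroup.nilpotent_iff_lowerCentralSeries.1 hn
  obtain ⟨h, hh, x, hx, hhx⟩ := key n
  rw [hn, Subgroup.mem_bot] at hh
  subst hh
  have : aff 1 0 = aff 1 x := by rw [aff_one, ← hhx]; rfl
  exact hx (aff_inj this).2.symm

end Stmt17


/-- with `λ = (1+√2)²`, the set `R` of matrices
`[[λ^n, a + b√2], [0, 1]]` (`n, a, b ∈ ℤ`) is a subgroup of `GL(2,ℝ)`, it is
solvable, and it is not virtually nilpotent. -/
theorem stmt_17 :
    ∃ Γ : Subgroup (Matrix.GeneralLinearGroup (Fin 2) ℝ),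
      ((fun g : Matrix.GeneralLinearGroup (Fin 2) ℝ =>
          (g : Matrix (Fin 2) (Fin 2) ℝ)) '' (Γ : Set (Matrix.GeneralLinearGroup (Fin 2) ℝ)) =
        {M : Matrix (Fin 2) (Fin 2) ℝ | ∃ n a b : ℤ,
          M = !![((1 + Real.sqrt 2) ^ 2) ^ n, (a : ℝ) + (b : ℝ) * Real.sqrt 2; 0, 1]}) ∧
      IsSolvable Γ ∧
      ¬ ∃ H : Subgroup Γ, H.FiniteIndex ∧ Group.IsNilpotent H := by
  refine ⟨Stmt17.R, ?_, Stmt17.solvable_R, ?_⟩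
  · ext M
    constructor
    · rintro ⟨_, ⟨n, x, ⟨a, b, rfl⟩, rfl⟩, rfl⟩
      refine ⟨n, a, b, ?_⟩
      simp only [Stmt17.aff_val, Units.val_zpow_eq_zpow_val]
      rfl
    · rintro ⟨n, a, b, rfl⟩
      refine ⟨_, ⟨n, _, ⟨a, b, rfl⟩, rfl⟩, ?_⟩
      simp only [Stmt17.aff_val, Units.val_zpow_eq_zpow_val]
      rfl
  · rintro ⟨H, h1, h2⟩
    exact Stmt17.not_vnil H h1 h2
end
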